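/- There exist constants c ∈ (0,1), N > 0 and C > 0 such that for all ν > N, every positive integer k, every j that is the k-th positive zero of J_ν with j ≥ (1+c)ν, and every x* ≥ ν satisfying x*·g(ν/x*) = k − 1/4, one has | j − x* | ≤ C/(ν + k). -/

import Mathlib

open Real MeasureTheory Set

/-- The Bessel function of the first kind of order `ν ≥ 0`, for `x > 0`, via the
integral representation. -/
noncomputable def besselJ (ν x : ℝ) : ℝ :=
  (1 / π) * (∫ θ in (0:ℝ)..π, Real.cos (x * Real.sin θ - ν * θ)) -
    (Real.sin (ν * π) / π) * ∫ t in Set.Ioi (0:ℝ), Real.exp (-x * Real.sinh t - ν * t)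

/-- The function `g(t) = (√(1-t²) - t arccos t)/π`. -/
noncomputable def gfun (t : ℝ) : ℝ := (Real.sqrt (1 - t ^ 2) - t * Real.arccos t) / π

/-- `j` is the `k`-th positive zero of `J_ν`: `j > 0`, `J_ν(j) = 0`, and there are exactly
`k - 1` zeros of `J_ν` in `(0, j)`. -/
def IsKthZero (ν : ℝ) (k : ℕ) (j : ℝ) : Prop :=
  0 < j ∧ besselJ ν j = 0 ∧ {x : ℝ | 0 < x ∧ x < j ∧ besselJ ν x = 0}.ncard = k - 1


/-! ### Part 1: the Bessel differential equation -/

lemma bz_bound (ν : ℝ) (n : ℕ) (x : ℝ) (hx : 0 ≤ x) (t : ℝ) (ht : 0 < t) :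
    ‖Real.sinh t ^ n * Real.exp (-x * Real.sinh t - ν * t)‖ ≤ Real.exp (((n : ℝ) - ν) * t) := by
  have h0 : 0 < Real.sinh t := Real.sinh_pos_iff.mpr ht
  have h1 : Real.sinh t ≤ Real.exp t := by
    rw [Real.sinh_eq]
    have := Real.exp_pos (-t)
    have := Real.exp_pos t
    linarith
  rw [Real.norm_of_nonneg (by positivity)]
  have h2 : Real.sinh t ^ n ≤ Real.exp ((n : ℝ) * t) := by
    rw [Real.exp_nat_mul]
    exact pow_le_pow_left₀ h0.le h1 n
  have h3 : Real.exp (-x * Real.sinh t - ν * t) ≤ Real.exp (- ν * t) := by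
    apply Real.exp_le_exp.mpr
    nlinarith [mul_nonneg hx h0.le]
  calc _ ≤ Real.exp ((n : ℝ) * t) * Real.exp (- ν * t) := by gcongr
    _ = _ := by rw [← Real.exp_add]; ring_nf

lemma bz_exp_int (a : ℝ) (ha : a < 0) :
    IntegrableOn (fun t : ℝ => Real.exp (a * t)) (Set.Ioi 0) := by
  exact integrableOn_exp_mul_Ioi ha 0

lemma bz_int (ν : ℝ) (n : ℕ) (hn : (n : ℝ) < ν) (x : ℝ) (hx : 0 ≤ x) :
    IntegrableOn (fun t => Real.sinh t ^ n * Real.exp (-x * Real.sinh t - ν * t)) (Set.Ioi 0) := by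
  refine Integrable.mono' (bz_exp_int ((n : ℝ) - ν) (by linarith)) ?_ ?_
  · exact (by fun_prop : Continuous fun t => Real.sinh t ^ n * Real.exp (-x * Real.sinh t - ν * t)).aestronglyMeasurable
  · filter_upwards [ae_restrict_mem measurableSet_Ioi] with t ht
    exact bz_bound ν n x hx t ht

noncomputable def bzK (ν : ℝ) (n : ℕ) (x : ℝ) : ℝ :=
  ∫ t in Set.Ioi (0:ℝ), Real.sinh t ^ n * Real.exp (-x * Real.sinh t - ν * t)

lemma bzK_bound (ν : ℝ) (n : ℕ) (hn : (n : ℝ) < ν) (x : ℝ) (hx : 0 ≤ x) :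
    |bzK ν n x| ≤ 1 / (ν - n) := by
  have h1 : ‖bzK ν n x‖ ≤ ∫ t in Set.Ioi (0:ℝ), Real.exp (((n : ℝ) - ν) * t) := by
    apply norm_integral_le_of_norm_le (bz_exp_int _ (by linarith))
    filter_upwards [ae_restrict_mem measurableSet_Ioi] with t ht
    exact bz_bound ν n x hx t ht
  rw [integral_exp_mul_Ioi (by linarith)] at h1
  rw [Real.norm_eq_abs] at h1
  refine h1.trans (le_of_eq ?_)
  have : (n : ℝ) - ν ≠ 0 := by linarith
  have : ν - (n : ℝ) ≠ 0 := by linarith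
  simp
  rw [neg_div, ← div_neg]
  simp

lemma bzK_deriv (ν : ℝ) (n : ℕ) (hn : (n : ℝ) + 1 < ν) (x : ℝ) (hx : 0 < x) :
    HasDerivAt (bzK ν n) (- bzK ν (n+1) x) x := by
  have key := hasDerivAt_integral_of_dominated_loc_of_deriv_le
    (μ := volume.restrict (Set.Ioi (0:ℝ))) (x₀ := x) (s := Set.Ioi 0)
    (F := fun x t => Real.sinh t ^ n * Real.exp (-x * Real.sinh t - ν * t))
    (F' := fun x t => - (Real.sinh t ^ (n+1) * Real.exp (-x * Real.sinh t - ν * t)))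
    (bound := fun t => Real.exp ((((n+1 : ℕ) : ℝ) - ν) * t))
    (Ioi_mem_nhds hx) ?_ ?_ ?_ ?_ ?_ ?_
  · have := key.2
    rw [integral_neg] at this
    exact this
  · filter_upwards with y
    exact (by fun_prop : Continuous fun t => Real.sinh t ^ n * Real.exp (-y * Real.sinh t - ν * t)).aestronglyMeasurable
  · exact bz_int ν n (by linarith) x hx.le
  · exact (by fun_prop : Continuous fun t => -(Real.sinh t ^ (n+1) * Real.exp (-x * Real.sinh t - ν * t))).aestronglyMeasurable
  · filter_upwards [ae_restrict_mem measurableSet_Ioi] with t ht y hy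
    rw [norm_neg]
    exact bz_bound ν (n+1) y (le_of_lt hy) t ht
  · exact bz_exp_int _ (by push_cast; linarith)
  · filter_upwards with t y hy
    have h1 : HasDerivAt (fun y : ℝ => -y * Real.sinh t - ν * t) (- Real.sinh t) y := by
      have := (((hasDerivAt_id y).neg).mul_const (Real.sinh t)).sub_const (ν * t)
      simpa using this
    have h2 := (h1.exp).const_mul (Real.sinh t ^ n)
    refine h2.congr_deriv ?_
    ring

noncomputable def bzC (ν x : ℝ) : ℝ := ∫ θ in (0:ℝ)..π, Real.cos (x * Real.sin θ - ν * θ)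
noncomputable def bzS (ν x : ℝ) : ℝ :=
  ∫ θ in (0:ℝ)..π, Real.sin θ * Real.sin (x * Real.sin θ - ν * θ)
noncomputable def bzC2 (ν x : ℝ) : ℝ :=
  ∫ θ in (0:ℝ)..π, Real.sin θ ^ 2 * Real.cos (x * Real.sin θ - ν * θ)

lemma bzC_deriv (ν x : ℝ) : HasDerivAt (bzC ν) (- bzS ν x) x := by
  have key := intervalIntegral.hasDerivAt_integral_of_dominated_loc_of_deriv_le
    (μ := volume) (a := 0) (b := π) (x₀ := x) (s := Set.univ)
    (F := fun x θ => Real.cos (x * Real.sin θ - ν * θ))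
    (F' := fun x θ => - (Real.sin θ * Real.sin (x * Real.sin θ - ν * θ)))
    (bound := fun _ => 1)
    Filter.univ_mem ?_ ?_ ?_ ?_ ?_ ?_
  · have := key.2
    rw [intervalIntegral.integral_neg] at this
    exact this
  · filter_upwards with y
    exact (by fun_prop : Continuous fun θ => Real.cos (y * Real.sin θ - ν * θ)).aestronglyMeasurable
  · exact (by fun_prop : Continuous fun θ => Real.cos (x * Real.sin θ - ν * θ)).intervalIntegrable _ _
  · exact (by fun_prop : Continuous fun θ => -(Real.sin θ * Real.sin (x * Real.sin θ - ν * θ))).aestronglyMeasurable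
  · filter_upwards with t _ y _
    rw [norm_neg, norm_mul]
    exact mul_le_one₀ (Real.abs_sin_le_one _) (norm_nonneg _) (Real.abs_sin_le_one _)
  · exact continuous_const.intervalIntegrable _ _
  · filter_upwards with t _ y _
    have h1 : HasDerivAt (fun y : ℝ => y * Real.sin t - ν * t) (Real.sin t) y := by
      have := (((hasDerivAt_id y)).mul_const (Real.sin t)).sub_const (ν * t)
      simpa using this
    refine h1.cos.congr_deriv ?_
    ring

lemma bzS_deriv (ν x : ℝ) : HasDerivAt (bzS ν) (bzC2 ν x) x := by
  have key := intervalIntegral.hasDerivAt_integral_of_dominated_loc_of_deriv_le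
    (μ := volume) (a := 0) (b := π) (x₀ := x) (s := Set.univ)
    (F := fun x θ => Real.sin θ * Real.sin (x * Real.sin θ - ν * θ))
    (F' := fun x θ => Real.sin θ ^ 2 * Real.cos (x * Real.sin θ - ν * θ))
    (bound := fun _ => 1)
    Filter.univ_mem ?_ ?_ ?_ ?_ ?_ ?_
  · exact key.2
  · filter_upwards with y
    exact (by fun_prop : Continuous fun θ => Real.sin θ * Real.sin (y * Real.sin θ - ν * θ)).aestronglyMeasurable
  · exact (by fun_prop : Continuous fun θ => Real.sin θ * Real.sin (x * Real.sin θ - ν * θ)).intervalIntegrable _ _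
  · exact (by fun_prop : Continuous fun θ => Real.sin θ ^ 2 * Real.cos (x * Real.sin θ - ν * θ)).aestronglyMeasurable
  · filter_upwards with t _ y _
    rw [norm_mul, norm_pow]
    exact mul_le_one₀ (pow_le_one₀ (norm_nonneg _) (Real.abs_sin_le_one _)) (norm_nonneg _) (Real.abs_cos_le_one _)
  · exact continuous_const.intervalIntegrable _ _
  · filter_upwards with t _ y _
    have h1 : HasDerivAt (fun y : ℝ => y * Real.sin t - ν * t) (Real.sin t) y := by
      have := (((hasDerivAt_id y)).mul_const (Real.sin t)).sub_const (ν * t)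
      simpa using this
    refine (h1.sin.const_mul _).congr_deriv ?_
    ring

lemma bzC_identity (ν x : ℝ) :
    - x ^ 2 * bzC2 ν x - x * bzS ν x + (x ^ 2 - ν ^ 2) * bzC ν x
      = (x - ν) * Real.sin (ν * π) := by
  have h1 : ∫ θ in (0:ℝ)..π, (- x ^ 2 * (Real.sin θ ^ 2 * Real.cos (x * Real.sin θ - ν * θ))
      - x * (Real.sin θ * Real.sin (x * Real.sin θ - ν * θ))
      + (x ^ 2 - ν ^ 2) * Real.cos (x * Real.sin θ - ν * θ))
      = (x * Real.cos π + ν) * Real.sin (x * Real.sin π - ν * π)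
        - (x * Real.cos 0 + ν) * Real.sin (x * Real.sin 0 - ν * 0) := by
    apply intervalIntegral.integral_eq_sub_of_hasDerivAt
      (f := fun θ => (x * Real.cos θ + ν) * Real.sin (x * Real.sin θ - ν * θ))
    · intro θ _
      have a1 : HasDerivAt (fun θ : ℝ => x * Real.sin θ - ν * θ) (x * Real.cos θ - ν) θ := by
        have := ((Real.hasDerivAt_sin θ).const_mul x).sub ((hasDerivAt_id θ).const_mul ν)
        exact this.congr_deriv (by simp)
      have a2 : HasDerivAt (fun θ : ℝ => x * Real.cos θ + ν) (- x * Real.sin θ) θ := by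
        have := ((Real.hasDerivAt_cos θ).const_mul x).add_const ν
        simpa using this
      refine (a2.mul a1.sin).congr_deriv ?_
      have := Real.sin_sq_add_cos_sq θ
      have e : Real.sin θ ^ 2 = 1 - Real.cos θ ^ 2 := by linarith
      rw [e]
      ring
    · apply Continuous.intervalIntegrable
      fun_prop
  rw [intervalIntegral.integral_add, intervalIntegral.integral_sub,
    intervalIntegral.integral_const_mul, intervalIntegral.integral_const_mul,
    intervalIntegral.integral_const_mul] at h1
  · unfold bzC2 bzS bzC
    rw [h1]
    simp
    ring
  all_goals
    apply Continuous.intervalIntegrable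
    fun_prop

lemma bzK_identity (ν x : ℝ) (hν : 3 < ν) (hx : 0 < x) :
    x ^ 2 * bzK ν 2 x - x * bzK ν 1 x + (x ^ 2 - ν ^ 2) * bzK ν 0 x = x - ν := by
  have i0 := bz_int ν 0 (by push_cast; linarith) x hx.le
  have i1 := bz_int ν 1 (by push_cast; linarith) x hx.le
  have i2 := bz_int ν 2 (by push_cast; linarith) x hx.le
  have h1 : ∫ t in Set.Ioi (0:ℝ), (x ^ 2 * (Real.sinh t ^ 2 * Real.exp (-x * Real.sinh t - ν * t))
      - x * (Real.sinh t ^ 1 * Real.exp (-x * Real.sinh t - ν * t))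
      + (x ^ 2 - ν ^ 2) * (Real.sinh t ^ 0 * Real.exp (-x * Real.sinh t - ν * t)))
      = 0 - (- (x * Real.cosh 0 - ν) * Real.exp (-x * Real.sinh 0 - ν * 0)) := by
    apply integral_Ioi_of_hasDerivAt_of_tendsto
      (f := fun t => - (x * Real.cosh t - ν) * Real.exp (-x * Real.sinh t - ν * t))
    · apply Continuous.continuousWithinAt
      fun_prop
    · intro t _
      have a1 : HasDerivAt (fun t : ℝ => -x * Real.sinh t - ν * t) (-x * Real.cosh t - ν) t := by
        have := ((Real.hasDerivAt_sinh t).const_mul (-x)).sub ((hasDerivAt_id t).const_mul ν)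
        exact this.congr_deriv (by simp)
      have a2 : HasDerivAt (fun t : ℝ => -(x * Real.cosh t - ν)) (- (x * Real.sinh t)) t := by
        have := (((Real.hasDerivAt_cosh t).const_mul x).sub_const ν).neg
        exact this.congr_deriv (by simp)
      refine (a2.mul a1.exp).congr_deriv ?_
      have e : Real.sinh t ^ 2 = Real.cosh t ^ 2 - 1 := by
        have := Real.cosh_sq t
        linarith
      rw [e]
      ring
    · exact ((i2.const_mul _).sub (i1.const_mul _)).add (i0.const_mul _)
    · have hb : Filter.Tendsto (fun t : ℝ => (x + ν) * Real.exp (-(ν - 1) * t)) Filter.atTop (nhds 0) := by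
        have : Filter.Tendsto (fun t : ℝ => Real.exp (-(ν - 1) * t)) Filter.atTop (nhds 0) := by
          apply Real.tendsto_exp_atBot.comp
          apply Filter.Tendsto.const_mul_atTop_of_neg (by linarith) Filter.tendsto_id
        simpa using this.const_mul (x + ν)
      apply squeeze_zero_norm' _ hb
      filter_upwards [Filter.eventually_gt_atTop 0] with t ht
      have c1 : Real.cosh t ≤ Real.exp t := by
        rw [Real.cosh_eq]
        have : Real.exp (-t) ≤ Real.exp t := Real.exp_le_exp.mpr (by linarith)
        linarith
      have c0 := Real.one_le_cosh t
      have ce : 1 ≤ Real.exp t := c0.trans c1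
      have s0 : 0 < Real.sinh t := Real.sinh_pos_iff.mpr ht
      rw [norm_mul, norm_neg, Real.norm_eq_abs, Real.norm_of_nonneg (Real.exp_pos _).le]
      have b1 : |x * Real.cosh t - ν| ≤ (x + ν) * Real.exp t := by
        rw [abs_le]
        constructor <;> nlinarith
      have b2 : Real.exp (-x * Real.sinh t - ν * t) ≤ Real.exp (-ν * t) := by
        apply Real.exp_le_exp.mpr
        nlinarith [mul_pos hx s0]
      calc _ ≤ ((x + ν) * Real.exp t) * Real.exp (-ν * t) := by gcongr
        _ = _ := by rw [mul_assoc, ← Real.exp_add]; ring_nf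
  have i21 : Integrable (fun t => x ^ 2 * (Real.sinh t ^ 2 * Real.exp (-x * Real.sinh t - ν * t))
      - x * (Real.sinh t ^ 1 * Real.exp (-x * Real.sinh t - ν * t)))
      (volume.restrict (Set.Ioi (0:ℝ))) := (i2.const_mul _).sub (i1.const_mul _)
  rw [integral_add i21 (i0.const_mul _),
    integral_sub (i2.const_mul _) (i1.const_mul _),
    integral_const_mul, integral_const_mul, integral_const_mul] at h1
  unfold bzK
  rw [h1]
  simp

noncomputable def bzJ' (ν x : ℝ) : ℝ :=
  - (1 / π) * bzS ν x + (Real.sin (ν * π) / π) * bzK ν 1 x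
noncomputable def bzJ'' (ν x : ℝ) : ℝ :=
  - (1 / π) * bzC2 ν x - (Real.sin (ν * π) / π) * bzK ν 2 x

lemma besselJ_eq (ν x : ℝ) : besselJ ν x =
    (1 / π) * bzC ν x - (Real.sin (ν * π) / π) * bzK ν 0 x := by
  simp [besselJ, bzC, bzK]

lemma bz_ode1 (ν x : ℝ) (hν : 3 < ν) (hx : 0 < x) :
    HasDerivAt (besselJ ν) (bzJ' ν x) x := by
  have h := ((bzC_deriv ν x).const_mul (1 / π)).sub
    ((bzK_deriv ν 0 (by push_cast; linarith) x hx).const_mul (Real.sin (ν * π) / π))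
  have e : besselJ ν = fun x => (1 / π) * bzC ν x - (Real.sin (ν * π) / π) * bzK ν 0 x :=
    funext (besselJ_eq ν)
  rw [e]
  refine h.congr_deriv ?_
  unfold bzJ'
  ring

lemma bz_ode2 (ν x : ℝ) (hν : 3 < ν) (hx : 0 < x) :
    HasDerivAt (bzJ' ν) (bzJ'' ν x) x := by
  have h := ((bzS_deriv ν x).const_mul (- (1 / π))).add
    ((bzK_deriv ν 1 (by push_cast; linarith) x hx).const_mul (Real.sin (ν * π) / π))
  refine h.congr_deriv ?_
  unfold bzJ''
  ring

lemma bz_ode (ν x : ℝ) (hν : 3 < ν) (hx : 0 < x) :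
    x ^ 2 * bzJ'' ν x + x * bzJ' ν x + (x ^ 2 - ν ^ 2) * besselJ ν x = 0 := by
  have h1 := bzC_identity ν x
  have h2 := bzK_identity ν x hν hx
  rw [besselJ_eq]
  unfold bzJ' bzJ''
  linear_combination (1 / π) * h1 - (Real.sin (ν * π) / π) * h2

lemma bz_norm_int (f : ℝ → ℝ) (hf : ∀ θ, |f θ| ≤ 1) : |∫ θ in (0:ℝ)..π, f θ| ≤ π := by
  have := intervalIntegral.norm_integral_le_of_norm_le_const (a := 0) (b := π) (C := 1) (f := f)
    (fun x _ => hf x)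
  simpa [abs_of_pos Real.pi_pos] using this

lemma bz_bdd (ν : ℝ) (hν : 3 < ν) : ∀ x, 0 < x → |besselJ ν x * bzJ' ν x| ≤ 4 := by
  intro x hx
  have hp := Real.pi_gt_three
  have hpp : |1 / π| = 1 / π := abs_of_pos (by positivity)
  have k0 : |bzK ν 0 x| ≤ 1 := (bzK_bound ν 0 (by push_cast; linarith) x hx.le).trans (by
    rw [div_le_one (by push_cast; linarith)]; push_cast; linarith)
  have k1 : |bzK ν 1 x| ≤ 1 := (bzK_bound ν 1 (by push_cast; linarith) x hx.le).trans (by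
    rw [div_le_one (by push_cast; linarith)]; push_cast; linarith)
  have hs : |Real.sin (ν * π) / π| ≤ 1 := by
    rw [abs_div, abs_of_pos Real.pi_pos, div_le_one Real.pi_pos]
    exact (Real.abs_sin_le_one _).trans (by linarith)
  have c0 : |1 / π * bzC ν x| ≤ 1 := by
    rw [abs_mul, hpp, div_mul_eq_mul_div, one_mul, div_le_one Real.pi_pos]
    exact bz_norm_int _ (fun θ => Real.abs_cos_le_one _)
  have s0 : |-(1 / π) * bzS ν x| ≤ 1 := by
    rw [abs_mul, abs_neg, hpp, div_mul_eq_mul_div, one_mul, div_le_one Real.pi_pos]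
    refine bz_norm_int _ (fun θ => ?_)
    rw [abs_mul]
    exact mul_le_one₀ (Real.abs_sin_le_one _) (abs_nonneg _) (Real.abs_sin_le_one _)
  have m0 : |Real.sin (ν * π) / π * bzK ν 0 x| ≤ 1 := by
    rw [abs_mul]; exact mul_le_one₀ hs (abs_nonneg _) k0
  have m1 : |Real.sin (ν * π) / π * bzK ν 1 x| ≤ 1 := by
    rw [abs_mul]; exact mul_le_one₀ hs (abs_nonneg _) k1
  have j0 : |besselJ ν x| ≤ 2 := by
    rw [besselJ_eq]
    exact (abs_sub _ _).trans (by linarith)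
  have j1 : |bzJ' ν x| ≤ 2 := by
    exact (abs_add_le _ _).trans (by linarith)
  rw [abs_mul]
  calc _ ≤ (2:ℝ) * 2 := by gcongr
    _ = 4 := by norm_num

/-! ### Part 2: Fresnel integrals and the large argument asymptotics -/

lemma bz_gauss_tail (b : ℂ) (hb : 0 ≤ b.re) (hb2 : 1 / 2 ≤ ‖b‖) (T T' : ℝ) (hT : 0 < T) (hTT : T ≤ T') :
    ‖∫ y in T..T', Complex.exp (-b * (y : ℂ) ^ 2)‖ ≤ 2 / T := by
  have hb0 : b ≠ 0 := by
    intro h; rw [h] at hb2; norm_num at hb2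
  have hT' : 0 < T' := hT.trans_le hTT
  have hpos : ∀ y ∈ Set.uIcc T T', 0 < y := by
    intro y hy
    rw [Set.uIcc_of_le hTT] at hy
    exact hT.trans_le hy.1
  have hne : ∀ y ∈ Set.uIcc T T', (y : ℂ) ≠ 0 := fun y hy => by
    exact_mod_cast (hpos y hy).ne'
  have hnorm : ∀ y : ℝ, ‖Complex.exp (-b * (y : ℂ) ^ 2)‖ ≤ 1 := by
    intro y
    rw [Complex.norm_exp]
    apply Real.exp_le_one_iff.mpr
    have : (-b * (y : ℂ) ^ 2).re = - (b.re * y ^ 2) := by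
      rw [← Complex.ofReal_pow, Complex.re_mul_ofReal]; simp
    rw [this]
    have := mul_nonneg hb (sq_nonneg y)
    linarith
  have hi1 : IntervalIntegrable (fun y : ℝ => Complex.exp (-b * (y : ℂ) ^ 2)) volume T T' := by
    apply Continuous.intervalIntegrable; fun_prop
  have hi2 : IntervalIntegrable (fun y : ℝ => Complex.exp (-b * (y : ℂ) ^ 2) / (2 * b * (y : ℂ) ^ 2)) volume T T' := by
    apply ContinuousOn.intervalIntegrable
    apply ContinuousOn.div (by fun_prop) (by fun_prop)
    intro y hy
    have := hne y hy
    simp [hb0, this]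
  have ftc : ∫ y in T..T', (Complex.exp (-b * (y : ℂ) ^ 2)
      + Complex.exp (-b * (y : ℂ) ^ 2) / (2 * b * (y : ℂ) ^ 2))
      = Complex.exp (-b * (T' : ℂ) ^ 2) / (-2 * b * T') - Complex.exp (-b * (T : ℂ) ^ 2) / (-2 * b * T) := by
    apply intervalIntegral.integral_eq_sub_of_hasDerivAt
      (f := fun y : ℝ => Complex.exp (-b * (y : ℂ) ^ 2) / (-2 * b * y))
    · intro y hy
      have hy0 := hne y hy
      have h1 : HasDerivAt (fun z : ℂ => Complex.exp (-b * z ^ 2) / (-2 * b * z))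
          (Complex.exp (-b * (y : ℂ) ^ 2)
          + Complex.exp (-b * (y : ℂ) ^ 2) / (2 * b * (y : ℂ) ^ 2)) (y : ℂ) := by
        have a1 : HasDerivAt (fun z : ℂ => Complex.exp (-b * z ^ 2))
            (Complex.exp (-b * (y : ℂ) ^ 2) * (-b * (2 * y))) (y : ℂ) := by
          have := ((hasDerivAt_pow 2 (y : ℂ)).const_mul (-b)).cexp
          exact this.congr_deriv (by simp)
        have a2 : HasDerivAt (fun z : ℂ => -2 * b * z) (-2 * b) (y : ℂ) := by
          have := (hasDerivAt_id (y : ℂ)).const_mul (-2 * b)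
          exact this.congr_deriv (by simp)
        refine (a1.div a2 ?_).congr_deriv ?_
        · simp [hb0, hy0]
        · field_simp
          ring
      exact h1.comp_ofReal
    · exact hi1.add hi2
  rw [intervalIntegral.integral_add hi1 hi2] at ftc
  have e : ∫ y in T..T', Complex.exp (-b * (y : ℂ) ^ 2) =
      Complex.exp (-b * (T' : ℂ) ^ 2) / (-2 * b * T') - Complex.exp (-b * (T : ℂ) ^ 2) / (-2 * b * T)
      - ∫ y in T..T', Complex.exp (-b * (y : ℂ) ^ 2) / (2 * b * (y : ℂ) ^ 2) := by
    rw [← ftc]; ring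
  have q : ∀ y : ℝ, 0 < y → ‖Complex.exp (-b * (y : ℂ) ^ 2) / (-2 * b * y)‖ ≤ 1 / y := by
    intro y hy
    rw [norm_div, norm_mul, norm_mul, norm_neg, Complex.norm_of_nonneg hy.le]
    simp only [Complex.norm_ofNat]
    apply div_le_div₀ zero_le_one (hnorm y) hy
    nlinarith
  have q2 : ‖∫ y in T..T', Complex.exp (-b * (y : ℂ) ^ 2) / (2 * b * (y : ℂ) ^ 2)‖ ≤ 1 / T - 1 / T' := by
    have hnat : ∫ y in T..T', 1 / y ^ 2 = 1 / T - 1 / T' := by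
      have := intervalIntegral.integral_eq_sub_of_hasDerivAt (a := T) (b := T')
        (f := fun y : ℝ => - y⁻¹) (f' := fun y => 1 / y ^ 2) ?_ ?_
      · rw [this]; simp; ring
      · intro y hy
        have := (hasDerivAt_inv (hpos y hy).ne').neg
        exact this.congr_deriv (by simp)
      · apply ContinuousOn.intervalIntegrable
        apply ContinuousOn.div (by fun_prop) (by fun_prop)
        intro y hy
        have := hpos y hy
        positivity
    rw [← hnat]
    apply intervalIntegral.norm_integral_le_of_norm_le hTT
    · filter_upwards with y hy
      have hy0 : 0 < y := hT.trans hy.1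
      rw [norm_div, norm_mul, norm_mul, norm_pow, Complex.norm_of_nonneg hy0.le]
      simp only [Complex.norm_ofNat]
      apply div_le_div₀ zero_le_one (hnorm y) (by positivity)
      nlinarith [sq_nonneg y]
    · apply ContinuousOn.intervalIntegrable
      apply ContinuousOn.div (by fun_prop) (by fun_prop)
      intro y hy
      have := hpos y hy
      positivity
  rw [e]
  calc _ ≤ 1 / T' + 1 / T + (1 / T - 1 / T') := by
        refine (norm_sub_le _ _).trans (add_le_add ((norm_sub_le _ _).trans ?_) q2)
        exact add_le_add (q T' hT') (q T hT)
    _ = 2 / T := by ring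

lemma bz_gauss (b : ℂ) (hb : 0 < b.re) (hb2 : 1 / 2 ≤ ‖b‖) (T : ℝ) (hT : 0 < T) :
    ‖(π / b) ^ (1 / 2 : ℂ) / 2 - ∫ y in (0:ℝ)..T, Complex.exp (-b * (y : ℂ) ^ 2)‖ ≤ 2 / T := by
  rw [← integral_gaussian_complex_Ioi hb]
  have hlim := intervalIntegral_tendsto_integral_Ioi (μ := volume) (0:ℝ)
    (integrable_cexp_neg_mul_sq hb).integrableOn Filter.tendsto_id
  have h2 := (hlim.sub_const (∫ y in (0:ℝ)..T, Complex.exp (-b * (y : ℂ) ^ 2))).norm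
  apply le_of_tendsto h2
  filter_upwards [Filter.eventually_ge_atTop T] with T' hT'
  rw [intervalIntegral.integral_interval_sub_left]
  · exact bz_gauss_tail b hb.le hb2 T T' hT hT'
  all_goals
    apply Continuous.intervalIntegrable; fun_prop

lemma bz_fresnel0 (T : ℝ) (hT : 0 < T) :
    ‖(π / (Complex.I / 2)) ^ (1 / 2 : ℂ) / 2 -
      ∫ y in (0:ℝ)..T, Complex.exp (-(Complex.I / 2) * (y : ℂ) ^ 2)‖ ≤ 2 / T := by
  have c1 : Filter.Tendsto (fun ε : ℝ => (π / ((ε : ℂ) + Complex.I / 2)) ^ (1 / 2 : ℂ) / 2)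
      (nhdsWithin 0 (Set.Ioi 0)) (nhds ((π / (Complex.I / 2)) ^ (1 / 2 : ℂ) / 2)) := by
    apply Filter.Tendsto.mono_left _ nhdsWithin_le_nhds
    have : ContinuousAt (fun ε : ℝ => (π / ((ε : ℂ) + Complex.I / 2)) ^ (1 / 2 : ℂ) / 2) 0 := by
      apply ContinuousAt.div_const
      apply ContinuousAt.cpow
      · apply ContinuousAt.div (by fun_prop) (by fun_prop)
        simp
      · fun_prop
      · right
        have : (π : ℂ) / (((0:ℝ) : ℂ) + Complex.I / 2) = ((-2 * π : ℝ) : ℂ) * Complex.I := by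
          simp
          field_simp
          simp
        rw [this]
        simp [Real.pi_ne_zero]
    have h := this.tendsto
    simpa using h
  have c2 : Filter.Tendsto (fun ε : ℝ => ∫ y in (0:ℝ)..T, Complex.exp (-((ε : ℂ) + Complex.I / 2) * (y : ℂ) ^ 2))
      (nhdsWithin 0 (Set.Ioi 0)) (nhds (∫ y in (0:ℝ)..T, Complex.exp (-(Complex.I / 2) * (y : ℂ) ^ 2))) := by
    apply Filter.Tendsto.mono_left _ nhdsWithin_le_nhds
    have : Continuous (fun ε : ℝ => ∫ y in (0:ℝ)..T, Complex.exp (-((ε : ℂ) + Complex.I / 2) * (y : ℂ) ^ 2)) := by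
      apply intervalIntegral.continuous_parametric_intervalIntegral_of_continuous' (μ := volume)
      simp only [Function.uncurry_def]
      fun_prop
    have h := this.tendsto 0
    simpa using h
  apply le_of_tendsto (c1.sub c2).norm
  filter_upwards [self_mem_nhdsWithin] with ε hε
  apply bz_gauss _ _ _ T hT
  · simpa using hε
  · have := Complex.abs_im_le_norm ((ε : ℂ) + Complex.I / 2)
    refine le_trans ?_ this
    simp

lemma bz_fresnel_val : ((π : ℂ) / (Complex.I / 2)) ^ (1 / 2 : ℂ) / 2 =
    (((√π / 2 : ℝ) : ℂ)) * (1 - Complex.I) := by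
  have h : (π : ℂ) / (Complex.I / 2) = ((((√π : ℝ) : ℂ)) * (1 - Complex.I)) ^ 2 := by
    have hp : ((√π : ℝ) : ℂ) ^ 2 = π := by
      rw [← Complex.ofReal_pow, Real.sq_sqrt Real.pi_pos.le]
    rw [mul_pow, hp]
    have : (1 - Complex.I) ^ 2 = -2 * Complex.I := by
      rw [sub_sq, Complex.I_sq]; ring
    rw [this]
    field_simp
    simp [Complex.I_sq]
  have h2 : (1 / 2 : ℂ) = (2 : ℂ)⁻¹ := by norm_num
  rw [h, h2, Complex.sq_cpow_two_inv]
  · push_cast; ring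
  · simp [Real.pi_pos]

lemma bz_fresnel (T : ℝ) (hT : 0 < T) :
    |√π / 2 - ∫ y in (0:ℝ)..T, Real.cos (y ^ 2 / 2)| ≤ 2 / T ∧
    |√π / 2 - ∫ y in (0:ℝ)..T, Real.sin (y ^ 2 / 2)| ≤ 2 / T := by
  have h := bz_fresnel0 T hT
  rw [bz_fresnel_val] at h
  have e : ∫ y in (0:ℝ)..T, Complex.exp (-(Complex.I / 2) * (y : ℂ) ^ 2) =
      ((∫ y in (0:ℝ)..T, Real.cos (y ^ 2 / 2) : ℝ) : ℂ) - ((∫ y in (0:ℝ)..T, Real.sin (y ^ 2 / 2) : ℝ) : ℂ) * Complex.I := by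
    rw [← intervalIntegral.integral_ofReal, ← intervalIntegral.integral_ofReal,
      ← intervalIntegral.integral_mul_const, ← intervalIntegral.integral_sub]
    · apply intervalIntegral.integral_congr
      intro y _
      have : (-(Complex.I / 2) * (y : ℂ) ^ 2) = ((-(y ^ 2 / 2) : ℝ) : ℂ) * Complex.I := by
        push_cast; ring
      simp only []
      rw [this, Complex.exp_mul_I, ← Complex.ofReal_cos, ← Complex.ofReal_sin, Real.cos_neg, Real.sin_neg]
      push_cast
      ring
    all_goals
      apply Continuous.intervalIntegrable; fun_prop
  rw [e] at h
  constructor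
  · refine le_trans (le_of_eq ?_) ((Complex.abs_re_le_norm _).trans h)
    congr 1
    simp
  · refine le_trans (le_of_eq ?_) ((Complex.abs_im_le_norm _).trans h)
    rw [← abs_neg]
    congr 1
    simp
    ring

lemma bzC_fold (ν x : ℝ) : bzC ν x =
    2 * ∫ α in (0:ℝ)..(π / 2), Real.cos (x * Real.cos α - ν * π / 2) * Real.cos (ν * α) := by
  have hc : Continuous fun θ => Real.cos (x * Real.sin θ - ν * θ) := by fun_prop
  unfold bzC
  rw [← intervalIntegral.integral_add_adjacent_intervals (hc.intervalIntegrable 0 (π / 2))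
    (hc.intervalIntegrable (π / 2) π)]
  have h1 := intervalIntegral.integral_comp_sub_left (a := 0) (b := π / 2)
    (fun θ => Real.cos (x * Real.sin θ - ν * θ)) (π / 2)
  have h2 := intervalIntegral.integral_comp_add_left (a := 0) (b := π / 2)
    (fun θ => Real.cos (x * Real.sin θ - ν * θ)) (π / 2)
  simp only [sub_self, sub_zero, add_zero, add_halves] at h1 h2
  rw [← h1, ← h2, ← intervalIntegral.integral_add, ← intervalIntegral.integral_const_mul]
  · apply intervalIntegral.integral_congr
    intro α _
    simp only []
    have s2 : Real.sin (π / 2 + α) = Real.cos α := by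
      rw [add_comm, Real.sin_add_pi_div_two]
    rw [Real.sin_pi_div_two_sub, s2]
    have e1 : x * Real.cos α - ν * (π / 2 - α) = (x * Real.cos α - ν * π / 2) + ν * α := by ring
    have e2 : x * Real.cos α - ν * (π / 2 + α) = (x * Real.cos α - ν * π / 2) - ν * α := by ring
    rw [e1, e2, Real.cos_add, Real.cos_sub (x * Real.cos α - ν * π / 2) (ν * α)]
    ring
  all_goals
    apply Continuous.intervalIntegrable; fun_prop

lemma bz_main_term (ν x : ℝ) (hx : 0 < x) :
    √x * ∫ α in (0:ℝ)..(π / 2), Real.cos (x * Real.cos α - ν * π / 2) * Real.cos (α / 2) =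
    Real.cos (x - ν * π / 2) * (∫ y in (0:ℝ)..(√x * √2), Real.cos (y ^ 2 / 2)) +
    Real.sin (x - ν * π / 2) * (∫ y in (0:ℝ)..(√x * √2), Real.sin (y ^ 2 / 2)) := by
  have h := intervalIntegral.integral_comp_mul_deriv (a := 0) (b := π / 2)
    (f := fun α => √x * (2 * Real.sin (α / 2))) (f' := fun α => √x * Real.cos (α / 2))
    (g := fun y => Real.cos (x - ν * π / 2 - y ^ 2 / 2)) ?_ ?_ ?_
  · have e1 : √x * (2 * Real.sin (π / 2 / 2)) = √x * √2 := by
      have : π / 2 / 2 = π / 4 := by ring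
      rw [this, Real.sin_pi_div_four]; ring
    rw [e1] at h
    simp only [zero_div, Real.sin_zero, mul_zero] at h
    rw [← intervalIntegral.integral_const_mul, ← intervalIntegral.integral_const_mul,
      ← intervalIntegral.integral_const_mul, ← intervalIntegral.integral_add]
    · have e2 : ∀ y : ℝ, Real.cos (x - ν * π / 2) * Real.cos (y ^ 2 / 2) +
          Real.sin (x - ν * π / 2) * Real.sin (y ^ 2 / 2) = Real.cos (x - ν * π / 2 - y ^ 2 / 2) := by
        intro y; rw [Real.cos_sub (x - ν * π / 2)]
      simp only [e2]
      rw [← h]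
      apply intervalIntegral.integral_congr
      intro α _
      simp only [Function.comp]
      have e3 : Real.cos α = 1 - 2 * Real.sin (α / 2) ^ 2 := by
        have := Real.cos_sq' (α / 2)
        have h2 := Real.cos_two_mul (α / 2)
        rw [mul_div_cancel₀ _ (two_ne_zero)] at h2
        rw [h2, this]; ring
      have e4 : x * Real.cos α - ν * π / 2 = x - ν * π / 2 - (√x * (2 * Real.sin (α / 2))) ^ 2 / 2 := by
        rw [e3, mul_pow, Real.sq_sqrt hx.le]; ring
      rw [e4]
      ring
    all_goals
      apply Continuous.intervalIntegrable; fun_prop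
  · intro α _
    have h1 : HasDerivAt (fun α : ℝ => α / 2) (1 / 2) α := (hasDerivAt_id α).div_const 2
    have := ((h1.sin).const_mul 2).const_mul (√x)
    exact this.congr_deriv (by ring)
  · fun_prop
  · fun_prop

lemma bz_rem (ν : ℝ) (hν : 3 < ν) : ∃ M : ℝ, ∀ x : ℝ, 0 < x →
    |∫ α in (0:ℝ)..(π / 2), Real.cos (x * Real.cos α - ν * π / 2) *
      (Real.cos (ν * α) - Real.cos (α / 2))| ≤ M / x := by
  have hp := Real.pi_pos
  have hν2 : 9 ≤ ν ^ 2 := by nlinarith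
  set m : ℝ → ℝ := fun α => Real.cos (ν * α) - Real.cos (α / 2) with hm
  set m' : ℝ → ℝ := fun α => - ν * Real.sin (ν * α) + (1 / 2) * Real.sin (α / 2) with hm'
  have hmd : ∀ α, HasDerivAt m (m' α) α := by
    intro α
    have h1 : HasDerivAt (fun α : ℝ => α / 2) (1 / 2) α := (hasDerivAt_id α).div_const 2
    have h2 : HasDerivAt (fun α : ℝ => ν * α) ν α := by
      have := (hasDerivAt_id α).const_mul ν
      exact this.congr_deriv (by simp)
    exact (h2.cos.sub h1.cos).congr_deriv (by simp only [hm']; ring)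
  have mb : ∀ α : ℝ, |m α| ≤ ν ^ 2 * α ^ 2 := by
    intro α
    have c1 := Real.one_sub_sq_div_two_le_cos (x := ν * α)
    have c2 := Real.one_sub_sq_div_two_le_cos (x := α / 2)
    have c3 := Real.cos_le_one (ν * α)
    have c4 := Real.cos_le_one (α / 2)
    have : α ^ 2 ≤ ν ^ 2 * α ^ 2 := by nlinarith [mul_nonneg (sub_nonneg.mpr hν2) (sq_nonneg α), sq_nonneg α]
    rw [abs_le]
    constructor <;> simp only [hm] <;> nlinarith [sq_nonneg α]
  have mb' : ∀ α : ℝ, 0 ≤ α → |m' α| ≤ 2 * ν ^ 2 * α := by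
    intro α hα
    have c1 : |Real.sin (ν * α)| ≤ ν * α := by
      have := Real.abs_sin_le_abs (x := ν * α)
      rwa [abs_of_nonneg (by positivity : 0 ≤ ν * α)] at this
    have c2 : |Real.sin (α / 2)| ≤ α / 2 := by
      have := Real.abs_sin_le_abs (x := α / 2)
      rwa [abs_of_nonneg (by positivity : 0 ≤ α / 2)] at this
    calc |m' α| ≤ |- ν * Real.sin (ν * α)| + |(1 / 2) * Real.sin (α / 2)| := abs_add_le _ _
      _ ≤ ν * (ν * α) + (1 / 2) * (α / 2) := by
        rw [abs_mul, abs_mul, abs_neg, abs_of_pos (by linarith : 0 < ν), abs_of_pos (by norm_num : (0:ℝ) < 1 / 2)]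
        gcongr
      _ ≤ _ := by nlinarith [mul_nonneg (sub_nonneg.mpr hν2) hα]
  set k : ℝ → ℝ := fun α => m α / Real.sin α with hk
  set k' : ℝ → ℝ := fun α => (m' α * Real.sin α - m α * Real.cos α) / Real.sin α ^ 2 with hk'
  have sl : ∀ α, 0 ≤ α → α ≤ π / 2 → α / 2 ≤ Real.sin α := by
    intro α h0 h1
    have := Real.mul_le_sin h0 h1
    have h2 : 1 / 2 ≤ 2 / π := by
      rw [div_le_div_iff₀ (by norm_num) hp]; linarith [Real.pi_le_four]
    nlinarith
  have kb : ∀ α, 0 ≤ α → α ≤ π / 2 → |k α| ≤ 2 * ν ^ 2 * α := by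
    intro α h0 h1
    rcases h0.eq_or_lt with h | h
    · simp [hk, ← h]
    · have hs := sl α h0 h1
      have hs0 : 0 < Real.sin α := by linarith
      simp only [hk]
      rw [abs_div, abs_of_pos hs0, div_le_iff₀ hs0]
      refine (mb α).trans ?_
      have : 0 ≤ 2 * ν ^ 2 * α := by positivity
      nlinarith
  have kb' : ∀ α, 0 < α → α ≤ π / 2 → |k' α| ≤ 8 * ν ^ 2 := by
    intro α h0 h1
    have hs := sl α h0.le h1
    have hs0 : 0 < Real.sin α := by linarith
    simp only [hk']
    rw [abs_div, abs_of_pos (by positivity : 0 < Real.sin α ^ 2), div_le_iff₀ (by positivity)]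
    have a1 : |m' α * Real.sin α| ≤ 2 * ν ^ 2 * α * Real.sin α := by
      rw [abs_mul, abs_of_pos hs0]
      exact mul_le_mul_of_nonneg_right (mb' α h0.le) hs0.le
    have a2 : |m α * Real.cos α| ≤ ν ^ 2 * α ^ 2 := by
      rw [abs_mul]
      calc _ ≤ (ν ^ 2 * α ^ 2) * 1 := by
            gcongr
            · exact mb α
            · exact Real.abs_cos_le_one α
        _ = _ := by ring
    refine (abs_sub _ _).trans ((add_le_add a1 a2).trans ?_)
    have b1 : α * Real.sin α ≤ 2 * Real.sin α ^ 2 := by nlinarith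
    have b2 : α ^ 2 ≤ 4 * Real.sin α ^ 2 := by nlinarith
    nlinarith [sq_nonneg ν]
  refine ⟨2 * ν ^ 2 * (π / 2) + 8 * ν ^ 2 * (π / 2), fun x hx => ?_⟩
  set V : ℝ → ℝ := fun α => Real.sin (x * Real.cos α - ν * π / 2) with hV
  have Vb : ∀ α, |V α| ≤ 1 := fun α => Real.abs_sin_le_one _
  have i1 : IntervalIntegrable (fun α => Real.cos (x * Real.cos α - ν * π / 2) * m α) volume 0 (π / 2) := by
    apply Continuous.intervalIntegrable; fun_prop
  have i2 : IntervalIntegrable (fun α => V α * k' α) volume 0 (π / 2) := by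
    rw [intervalIntegrable_iff_integrableOn_Ioc_of_le (by positivity)]
    apply Measure.integrableOn_of_bounded (M := 8 * ν ^ 2)
    rotate_left
    · simp
    · apply Measurable.aestronglyMeasurable
      fun_prop
    · filter_upwards [ae_restrict_mem measurableSet_Ioc] with α hα
      rw [norm_mul]
      calc _ ≤ 1 * (8 * ν ^ 2) := by
            gcongr
            · exact Vb α
            · exact kb' α hα.1 hα.2
        _ = _ := by ring
  have kc : ContinuousOn k (Set.Icc 0 (π / 2)) := by
    intro α hα
    rcases hα.1.eq_or_lt with h | h
    · subst h
      have k0 : k 0 = 0 := by simp [hk]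
      unfold ContinuousWithinAt
      rw [k0]
      apply squeeze_zero_norm' (a := fun α => 2 * ν ^ 2 * α)
      · filter_upwards [self_mem_nhdsWithin] with β hβ
        exact kb β hβ.1 hβ.2
      · have : Continuous (fun α : ℝ => 2 * ν ^ 2 * α) := by fun_prop
        have := this.tendsto 0
        simp only [mul_zero] at this
        exact this.mono_left nhdsWithin_le_nhds
    · apply ContinuousAt.continuousWithinAt
      have hs0 : Real.sin α ≠ 0 := by
        have := sl α hα.1 hα.2
        linarith
      exact ContinuousAt.div (hmd α).continuousAt Real.continuous_sin.continuousAt hs0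
  have ftc := intervalIntegral.integral_eq_sub_of_hasDerivAt_of_le (a := 0) (b := π / 2)
    (f := fun α => V α * k α)
    (f' := fun α => - x * (Real.cos (x * Real.cos α - ν * π / 2) * m α) + V α * k' α)
    (by positivity) ?_ ?_ ?_
  · rw [intervalIntegral.integral_add (i1.const_mul _) i2, intervalIntegral.integral_const_mul] at ftc
    have k0 : k 0 = 0 := by simp [hk]
    rw [k0] at ftc
    have b1 : |V (π / 2) * k (π / 2)| ≤ 2 * ν ^ 2 * (π / 2) := by
      rw [abs_mul]
      calc _ ≤ 1 * (2 * ν ^ 2 * (π / 2)) := by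
            gcongr
            · exact Vb _
            · exact kb _ (by positivity) le_rfl
        _ = _ := by ring
    have b2 : |∫ α in (0:ℝ)..(π / 2), V α * k' α| ≤ 8 * ν ^ 2 * (π / 2) := by
      have := intervalIntegral.norm_integral_le_of_norm_le_const (a := 0) (b := π / 2)
        (C := 8 * ν ^ 2) (f := fun α => V α * k' α) ?_
      · rwa [sub_zero, abs_of_pos (by positivity : 0 < π / 2)] at this
      · intro α hα
        rw [Set.uIoc_of_le (by positivity)] at hα
        rw [norm_mul]
        calc _ ≤ 1 * (8 * ν ^ 2) := by
              gcongr
              · exact Vb α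
              · exact kb' α hα.1 hα.2
          _ = _ := by ring
    have e : x * (∫ α in (0:ℝ)..(π / 2), Real.cos (x * Real.cos α - ν * π / 2) * m α) =
        (∫ α in (0:ℝ)..(π / 2), V α * k' α) - V (π / 2) * k (π / 2) := by linarith
    rw [le_div_iff₀ hx, mul_comm]
    have : x * |∫ α in (0:ℝ)..(π / 2), Real.cos (x * Real.cos α - ν * π / 2) * m α| =
        |x * ∫ α in (0:ℝ)..(π / 2), Real.cos (x * Real.cos α - ν * π / 2) * m α| := by
      rw [abs_mul, abs_of_pos hx]
    rw [this, e]
    exact (abs_sub _ _).trans (by linarith)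
  · exact ContinuousOn.mul (by fun_prop) kc
  · intro α hα
    have hs0 : Real.sin α ≠ 0 := by
      have := sl α hα.1.le hα.2.le
      have := hα.1
      linarith
    have d1 : HasDerivAt V (Real.cos (x * Real.cos α - ν * π / 2) * (x * - Real.sin α)) α := by
      have := (((Real.hasDerivAt_cos α).const_mul x).sub_const (ν * π / 2)).sin
      exact this
    have d2 : HasDerivAt k (k' α) α := (hmd α).div (Real.hasDerivAt_sin α) hs0
    refine (d1.mul d2).congr_deriv ?_
    have : k α * Real.sin α = m α := by simp only [hk]; field_simp
    rw [← this]
    ring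
  · exact (i1.const_mul _).add i2

lemma bzK_decay (ν x : ℝ) (hν : 3 < ν) (hx : 0 < x) : |bzK ν 0 x| ≤ 1 / x := by
  have h1 : ‖bzK ν 0 x‖ ≤ ∫ t in Set.Ioi (0:ℝ), Real.exp ((-x) * t) := by
    apply norm_integral_le_of_norm_le (bz_exp_int _ (by linarith))
    filter_upwards [ae_restrict_mem measurableSet_Ioi] with t ht
    simp only [pow_zero, one_mul]
    rw [Real.norm_of_nonneg (Real.exp_pos _).le]
    apply Real.exp_le_exp.mpr
    have h0 : 0 < t := ht
    have : t ≤ Real.sinh t := Real.self_le_sinh_iff.mpr h0.le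
    nlinarith
  rw [integral_exp_mul_Ioi (by linarith)] at h1
  simpa using h1

lemma bz_asymp (ν : ℝ) (hν : 3 < ν) : ∃ M : ℝ, ∀ x : ℝ, 0 < x →
    |π * (√x * besselJ ν x) - √π * (Real.cos (x - ν * π / 2) + Real.sin (x - ν * π / 2))| ≤ M / √x := by
  obtain ⟨M, hM⟩ := bz_rem ν hν
  refine ⟨2 * M + 8 + 1, fun x hx => ?_⟩
  have sx : 0 < √x := Real.sqrt_pos.mpr hx
  have sxx : √x * √x = x := Real.mul_self_sqrt hx.le
  have h1 := hM x hx
  have h2 := bz_main_term ν x hx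
  have s2 : 1 ≤ √2 := by rw [Real.one_le_sqrt]; norm_num
  have T0 : 0 < √x * √2 := by positivity
  obtain ⟨f1, f2⟩ := bz_fresnel (√x * √2) T0
  have fb : 2 / (√x * √2) ≤ 2 / √x := by
    apply div_le_div_of_nonneg_left (by norm_num) sx
    nlinarith
  have f1' := f1.trans fb
  have f2' := f2.trans fb
  have h3 := bzK_decay ν x hν hx
  have e := besselJ_eq ν x
  have e2 : bzC ν x = 2 * ((∫ α in (0:ℝ)..(π / 2), Real.cos (x * Real.cos α - ν * π / 2) * Real.cos (α / 2)) +
      ∫ α in (0:ℝ)..(π / 2), Real.cos (x * Real.cos α - ν * π / 2) * (Real.cos (ν * α) - Real.cos (α / 2))) := by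
    rw [bzC_fold, ← intervalIntegral.integral_add]
    · congr 1
      apply intervalIntegral.integral_congr
      intro α _
      simp only []
      ring
    all_goals
      apply Continuous.intervalIntegrable; fun_prop
  set A1 := ∫ α in (0:ℝ)..(π / 2), Real.cos (x * Real.cos α - ν * π / 2) * Real.cos (α / 2)
  set A2 := ∫ α in (0:ℝ)..(π / 2), Real.cos (x * Real.cos α - ν * π / 2) * (Real.cos (ν * α) - Real.cos (α / 2))
  set c := x - ν * π / 2
  set F1 := ∫ y in (0:ℝ)..(√x * √2), Real.cos (y ^ 2 / 2)
  set F2 := ∫ y in (0:ℝ)..(√x * √2), Real.sin (y ^ 2 / 2)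
  have e3 : π * (√x * besselJ ν x) - √π * (Real.cos c + Real.sin c) =
      2 * (√x * A2) - 2 * (Real.cos c * (√π / 2 - F1)) - 2 * (Real.sin c * (√π / 2 - F2))
        - √x * (Real.sin (ν * π) * bzK ν 0 x) := by
    rw [e, e2]
    have : π * (√x * (1 / π * (2 * (A1 + A2)) - Real.sin (ν * π) / π * bzK ν 0 x)) =
        2 * (√x * A1) + 2 * (√x * A2) - √x * (Real.sin (ν * π) * bzK ν 0 x) := by
      field_simp
    rw [this, h2]
    ring
  rw [e3]
  have g1 : |2 * (√x * A2)| ≤ 2 * M / √x := by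
    rw [abs_mul, abs_mul, abs_of_pos sx, abs_of_pos (by norm_num : (0:ℝ) < 2)]
    calc 2 * (√x * |A2|) ≤ 2 * (√x * (M / x)) := by gcongr
      _ = 2 * M / √x := by
        have sx2 : √x ^ 2 = x := Real.sq_sqrt hx.le
        field_simp
        rw [sx2]; ring
  have g2 : |2 * (Real.cos c * (√π / 2 - F1))| ≤ 4 / √x := by
    rw [abs_mul, abs_mul, abs_of_pos (by norm_num : (0:ℝ) < 2)]
    calc _ ≤ 2 * (1 * (2 / √x)) := by
          gcongr
          exact Real.abs_cos_le_one c
      _ = _ := by ring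
  have g3 : |2 * (Real.sin c * (√π / 2 - F2))| ≤ 4 / √x := by
    rw [abs_mul, abs_mul, abs_of_pos (by norm_num : (0:ℝ) < 2)]
    calc _ ≤ 2 * (1 * (2 / √x)) := by
          gcongr
          exact Real.abs_sin_le_one c
      _ = _ := by ring
  have g4 : |√x * (Real.sin (ν * π) * bzK ν 0 x)| ≤ 1 / √x := by
    rw [abs_mul, abs_mul, abs_of_pos sx]
    calc _ ≤ √x * (1 * (1 / x)) := by
          gcongr
          exact Real.abs_sin_le_one _
      _ = _ := by
        have sx2 : √x ^ 2 = x := Real.sq_sqrt hx.le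
        field_simp
        rw [sx2]
  calc _ ≤ 2 * M / √x + 4 / √x + 4 / √x + 1 / √x := by
        refine (abs_sub _ _).trans (add_le_add ((abs_sub _ _).trans (add_le_add ((abs_sub _ _).trans (add_le_add g1 g2)) g3)) g4)
    _ = _ := by ring

/-! ### Part 4: nontriviality, simple zeros, no zeros below the turning point -/

lemma bz_nontriv (ν : ℝ) (hν : 3 < ν) : ∃ x, 0 < x ∧ besselJ ν x ≠ 0 := by
  obtain ⟨M, hM⟩ := bz_asymp ν hν
  obtain ⟨n, hn⟩ := exists_nat_gt (M ^ 2 / π)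
  have hp := Real.pi_pos
  have hx : 0 < ν * π / 2 + n * (2 * π) := by positivity
  refine ⟨ν * π / 2 + n * (2 * π), hx, fun h0 => ?_⟩
  have h := hM _ hx
  have hxn : (n : ℝ) ≤ ν * π / 2 + n * (2 * π) := by
    have : (0:ℝ) ≤ n := Nat.cast_nonneg n
    have : 0 ≤ ν * π / 2 := by positivity
    nlinarith [Real.pi_gt_three]
  rw [h0, add_sub_cancel_left] at h
  have es : Real.sin ((n : ℝ) * (2 * π)) = 0 := by
    have e : (n : ℝ) * (2 * π) = ((2 * n : ℕ) : ℝ) * π := by push_cast; ring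
    rw [e, Real.sin_nat_mul_pi]
  rw [Real.cos_nat_mul_two_pi, es] at h
  set x := ν * π / 2 + n * (2 * π)
  have sx : 0 < √x := Real.sqrt_pos.mpr hx
  have sp : 0 < √π := Real.sqrt_pos.mpr hp
  simp only [mul_zero, add_zero, mul_one, zero_sub, abs_neg] at h
  rw [abs_of_pos sp, le_div_iff₀ sx] at h
  have h2 : (√π * √x) ^ 2 ≤ M ^ 2 := pow_le_pow_left₀ (by positivity) h 2
  rw [mul_pow, Real.sq_sqrt hp.le, Real.sq_sqrt hx.le] at h2
  rw [div_lt_iff₀ hp] at hn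
  nlinarith

lemma bz_gron (E E' : ℝ → ℝ) (a b M : ℝ) (hab : a ≤ b)
    (hE : ∀ x ∈ Set.Icc a b, HasDerivAt E (E' x) x) (hb : ∀ x ∈ Set.Icc a b, |E' x| ≤ M * E x)
    (h0 : ∀ x, 0 ≤ E x) : (E a = 0 → E b = 0) ∧ (E b = 0 → E a = 0) := by
  have d1 : ∀ x ∈ Set.Icc a b, ∀ s : ℝ, HasDerivAt (fun x => E x * Real.exp (s * x))
      ((E' x + s * E x) * Real.exp (s * x)) x := by
    intro x hx s
    have e1 : HasDerivAt (fun x : ℝ => s * x) s x := by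
      have := (hasDerivAt_id x).const_mul s
      exact this.congr_deriv (by simp)
    exact ((hE x hx).mul e1.exp).congr_deriv (by ring)
  have m1 : MonotoneOn (fun x => E x * Real.exp (M * x)) (Set.Icc a b) := by
    apply monotoneOn_of_hasDerivWithinAt_nonneg (convex_Icc a b)
      (f' := fun x => (E' x + M * E x) * Real.exp (M * x))
    · exact fun x hx => (d1 x hx M).continuousAt.continuousWithinAt
    · exact fun x hx => (d1 x (interior_subset hx) M).hasDerivWithinAt
    · intro x hx
      have := abs_le.mp (hb x (interior_subset hx))
      exact mul_nonneg (by linarith) (Real.exp_pos _).le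
  have m2 : AntitoneOn (fun x => E x * Real.exp (-M * x)) (Set.Icc a b) := by
    apply antitoneOn_of_hasDerivWithinAt_nonpos (convex_Icc a b)
      (f' := fun x => (E' x + (-M) * E x) * Real.exp (-M * x))
    · exact fun x hx => (d1 x hx (-M)).continuousAt.continuousWithinAt
    · exact fun x hx => (d1 x (interior_subset hx) (-M)).hasDerivWithinAt
    · intro x hx
      have := abs_le.mp (hb x (interior_subset hx))
      exact mul_nonpos_of_nonpos_of_nonneg (by linarith) (Real.exp_pos _).le
  have ha : a ∈ Set.Icc a b := ⟨le_rfl, hab⟩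
  have hb' : b ∈ Set.Icc a b := ⟨hab, le_rfl⟩
  constructor
  · intro h
    have := m2 ha hb' hab
    simp only [h, zero_mul] at this
    have h2 : E b ≤ 0 := by
      by_contra hc
      push Not at hc
      have := mul_pos hc (Real.exp_pos (-M * b))
      linarith
    exact le_antisymm h2 (h0 b)
  · intro h
    have := m1 ha hb' hab
    simp only [h, zero_mul] at this
    have h2 : E a ≤ 0 := by
      by_contra hc
      push Not at hc
      have := mul_pos hc (Real.exp_pos (M * a))
      linarith
    exact le_antisymm h2 (h0 a)

lemma bz_simple (ν : ℝ) (hν : 3 < ν) (x : ℝ) (hx : 0 < x) :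
    0 < besselJ ν x ^ 2 + bzJ' ν x ^ 2 := by
  by_contra hc
  have hz : besselJ ν x ^ 2 + bzJ' ν x ^ 2 = 0 := le_antisymm (not_lt.mp hc) (by positivity)
  obtain ⟨y, hy, hJ⟩ := bz_nontriv ν hν
  have key : ∀ a b : ℝ, 0 < a → a ≤ b →
      ((besselJ ν a ^ 2 + bzJ' ν a ^ 2 = 0 → besselJ ν b ^ 2 + bzJ' ν b ^ 2 = 0) ∧
      (besselJ ν b ^ 2 + bzJ' ν b ^ 2 = 0 → besselJ ν a ^ 2 + bzJ' ν a ^ 2 = 0)) := by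
    intro a b ha hab
    apply bz_gron (fun x => besselJ ν x ^ 2 + bzJ' ν x ^ 2)
      (fun x => 2 * besselJ ν x * bzJ' ν x + 2 * bzJ' ν x * bzJ'' ν x) a b
      (2 / a + ν ^ 2 / a ^ 2) hab
    · intro z hz
      have hz0 : 0 < z := ha.trans_le hz.1
      exact (((bz_ode1 ν z hν hz0).pow 2).add ((bz_ode2 ν z hν hz0).pow 2)).congr_deriv (by simp)
    · intro z hz
      have hz0 : 0 < z := ha.trans_le hz.1
      have ode := bz_ode ν z hν hz0
      have e : bzJ'' ν z = - bzJ' ν z / z - besselJ ν z + ν ^ 2 / z ^ 2 * besselJ ν z := by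
        field_simp
        linarith
      rw [e]
      set J := besselJ ν z
      set D := bzJ' ν z
      have e2 : 2 * J * D + 2 * D * (-D / z - J + ν ^ 2 / z ^ 2 * J) =
          - (2 / z) * D ^ 2 + ν ^ 2 / z ^ 2 * (2 * J * D) := by
        ring
      rw [e2]
      have p1 : 2 / z ≤ 2 / a := div_le_div_of_nonneg_left (by norm_num) ha hz.1
      have p2 : ν ^ 2 / z ^ 2 ≤ ν ^ 2 / a ^ 2 :=
        div_le_div_of_nonneg_left (by positivity) (by positivity) (pow_le_pow_left₀ ha.le hz.1 2)
      have q1 : |- (2 / z) * D ^ 2| ≤ 2 / a * (J ^ 2 + D ^ 2) := by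
        rw [abs_mul, abs_neg, abs_of_pos (by positivity : 0 < 2 / z), abs_of_nonneg (sq_nonneg D)]
        calc _ ≤ 2 / a * D ^ 2 := by gcongr
          _ ≤ _ := by gcongr; nlinarith [sq_nonneg J]
      have q2 : |ν ^ 2 / z ^ 2 * (2 * J * D)| ≤ ν ^ 2 / a ^ 2 * (J ^ 2 + D ^ 2) := by
        rw [abs_mul, abs_of_nonneg (by positivity : 0 ≤ ν ^ 2 / z ^ 2)]
        have : |2 * J * D| ≤ J ^ 2 + D ^ 2 := by
          rw [abs_le]; constructor <;> nlinarith [sq_nonneg (J - D), sq_nonneg (J + D)]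
        gcongr
      exact (abs_add_le _ _).trans (by linarith)
    · intro z; positivity
  have hy0 : besselJ ν y ^ 2 + bzJ' ν y ^ 2 = 0 := by
    rcases le_total x y with h | h
    · exact (key x y hx h).1 hz
    · exact (key y x hy h).2 hz
  apply hJ
  nlinarith [sq_nonneg (besselJ ν y), sq_nonneg (bzJ' ν y)]

lemma bz_nozero (ν : ℝ) (hν : 3 < ν) (x : ℝ) (hx : 0 < x) (hxν : x ≤ ν) : besselJ ν x ≠ 0 := by
  intro h0
  set m : ℝ → ℝ := fun z => z * (besselJ ν z * bzJ' ν z) with hm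
  have dm : ∀ z, 0 < z → HasDerivAt m (z * bzJ' ν z ^ 2 + (ν ^ 2 - z ^ 2) / z * besselJ ν z ^ 2) z := by
    intro z hz
    have ode := bz_ode ν z hν hz
    have e : bzJ'' ν z = - bzJ' ν z / z - besselJ ν z + ν ^ 2 / z ^ 2 * besselJ ν z := by
      field_simp
      linarith
    refine ((hasDerivAt_id z).mul ((bz_ode1 ν z hν hz).mul (bz_ode2 ν z hν hz))).congr_deriv ?_
    rw [e]
    simp only [id, Pi.mul_apply]
    field_simp
    ring
  have mm : MonotoneOn m (Set.Ioc 0 ν) := by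
    apply monotoneOn_of_hasDerivWithinAt_nonneg (convex_Ioc 0 ν)
      (f' := fun z => z * bzJ' ν z ^ 2 + (ν ^ 2 - z ^ 2) / z * besselJ ν z ^ 2)
    · exact fun z hz => (dm z hz.1).continuousAt.continuousWithinAt
    · exact fun z hz => (dm z (interior_subset hz).1).hasDerivWithinAt
    · intro z hz
      have h1 := interior_subset hz
      have hz0 : 0 < z := h1.1
      have : 0 ≤ ν ^ 2 - z ^ 2 := by nlinarith [h1.2]
      positivity
  have mnn : ∀ z ∈ Set.Ioc 0 ν, 0 ≤ m z := by
    intro z hz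
    by_contra hc
    push Not at hc
    set δ := min z (- m z / 8) with hδ
    have hδ0 : 0 < δ := lt_min hz.1 (by linarith)
    have hδz : δ ≤ z := min_le_left _ _
    have hδm : δ ≤ - m z / 8 := min_le_right _ _
    have h1 := mm ⟨hδ0, hδz.trans hz.2⟩ hz hδz
    have h2 := (abs_le.mp (bz_bdd ν hν δ hδ0)).1
    have h3 : -4 * δ ≤ m δ := by simp only [hm]; nlinarith
    linarith
  have sm : MonotoneOn (fun z => besselJ ν z ^ 2) (Set.Ioc 0 ν) := by
    apply monotoneOn_of_hasDerivWithinAt_nonneg (convex_Ioc 0 ν)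
      (f' := fun z => 2 * besselJ ν z * bzJ' ν z)
    · exact fun z hz => ((bz_ode1 ν z hν hz.1).pow 2).continuousAt.continuousWithinAt
    · exact fun z hz => (((bz_ode1 ν z hν (interior_subset hz).1).pow 2).congr_deriv (by simp)).hasDerivWithinAt
    · intro z hz
      have h1 := interior_subset hz
      have h2 := mnn z h1
      simp only [hm] at h2
      have := nonneg_of_mul_nonneg_right h2 h1.1
      linarith
  have hz : ∀ z ∈ Set.Ioo 0 x, besselJ ν z = 0 := by
    intro z hz
    have := sm ⟨hz.1, hz.2.le.trans hxν⟩ ⟨hx, hxν⟩ hz.2.le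
    simp only [h0] at this
    nlinarith [sq_nonneg (besselJ ν z)]
  have hmid : x / 2 ∈ Set.Ioo 0 x := ⟨by linarith, by linarith⟩
  have d0 : bzJ' ν (x / 2) = 0 := by
    have h1 := bz_ode1 ν (x / 2) hν hmid.1
    have h2 : HasDerivAt (besselJ ν) 0 (x / 2) := by
      apply (hasDerivAt_const (x / 2) (0:ℝ)).congr_of_eventuallyEq
      filter_upwards [Ioo_mem_nhds hmid.1 hmid.2] with z hz'
      exact hz z hz'
    exact h1.unique h2
  have := bz_simple ν hν (x / 2) hmid.1
  rw [d0, hz _ hmid] at this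
  simp at this

/-! ### Part 5: amplitude, phase and the auxiliary functions -/

noncomputable def bzphi (ν x : ℝ) : ℝ := √(x ^ 2 - ν ^ 2) - ν * Real.arccos (ν / x)
noncomputable def bza (ν x : ℝ) : ℝ := √√(x ^ 2 - ν ^ 2)
noncomputable def bzA (ν x : ℝ) : ℝ := bza ν x * besselJ ν x
noncomputable def bzB (ν x : ℝ) : ℝ :=
  x ^ 2 / (2 * bza ν x ^ 5) * besselJ ν x + x / bza ν x * bzJ' ν x
noncomputable def bzp (ν x : ℝ) : ℝ := bza ν x ^ 2 / x
noncomputable def bzR (ν x : ℝ) : ℝ := x ^ 2 * (x ^ 2 + 4 * ν ^ 2) / (4 * bza ν x ^ 12)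

lemma bza_sq (ν x : ℝ) : bza ν x ^ 2 = √(x ^ 2 - ν ^ 2) := by
  unfold bza; exact Real.sq_sqrt (Real.sqrt_nonneg _)

lemma bza_four (ν x : ℝ) (hν : 0 < ν) (hx : ν ≤ x) : bza ν x ^ 4 = x ^ 2 - ν ^ 2 := by
  have : bza ν x ^ 4 = (bza ν x ^ 2) ^ 2 := by ring
  rw [this, bza_sq, Real.sq_sqrt]
  nlinarith

lemma bza_pos (ν x : ℝ) (hν : 0 < ν) (hx : ν < x) : 0 < bza ν x := by
  unfold bza
  apply Real.sqrt_pos.mpr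
  apply Real.sqrt_pos.mpr
  nlinarith

lemma bza_deriv (ν x : ℝ) (hν : 0 < ν) (hx : ν < x) :
    HasDerivAt (bza ν) (x / (2 * bza ν x ^ 3)) x := by
  have hp : 0 < x ^ 2 - ν ^ 2 := by nlinarith
  have h1 : HasDerivAt (fun x : ℝ => x ^ 2 - ν ^ 2) (2 * x) x := by
    exact ((hasDerivAt_pow 2 x).sub_const _).congr_deriv (by simp)
  have h2 := (h1.sqrt hp.ne').sqrt (Real.sqrt_pos.mpr hp).ne'
  refine h2.congr_deriv ?_
  have h3 : √(x ^ 2 - ν ^ 2) = bza ν x ^ 2 := (bza_sq ν x).symm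
  have ha := bza_pos ν x hν hx
  rw [h3, Real.sqrt_sq ha.le]
  field_simp

lemma bzphi_deriv (ν x : ℝ) (hν : 0 < ν) (hx : ν < x) :
    HasDerivAt (bzphi ν) (bzp ν x) x := by
  have hp : 0 < x ^ 2 - ν ^ 2 := by nlinarith
  have hx0 : 0 < x := hν.trans hx
  have h1 : HasDerivAt (fun x : ℝ => x ^ 2 - ν ^ 2) (2 * x) x := by
    exact ((hasDerivAt_pow 2 x).sub_const _).congr_deriv (by simp)
  have h2 := (h1.sqrt hp.ne')
  have h3 : HasDerivAt (fun x : ℝ => ν / x) (- ν / x ^ 2) x := by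
    exact ((hasDerivAt_inv hx0.ne').const_mul ν).congr_deriv (by ring)
  have hlt : ν / x < 1 := (div_lt_one hx0).mpr hx
  have hgt : 0 < ν / x := by positivity
  have h4 := (Real.hasDerivAt_arccos (x := ν / x) (by linarith) hlt.ne).comp x h3
  have h5 := h2.sub (h4.const_mul ν)
  refine h5.congr_deriv ?_
  have e : √(1 - (ν / x) ^ 2) = √(x ^ 2 - ν ^ 2) / x := by
    have : 1 - (ν / x) ^ 2 = (x ^ 2 - ν ^ 2) / x ^ 2 := by field_simp
    rw [this, Real.sqrt_div hp.le, Real.sqrt_sq hx0.le]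
  rw [e]
  unfold bzp
  have hs : 0 < √(x ^ 2 - ν ^ 2) := Real.sqrt_pos.mpr hp
  rw [bza_sq]
  have hs2 := Real.sq_sqrt hp.le
  set S := √(x ^ 2 - ν ^ 2)
  field_simp
  linear_combination -hs2

lemma bzphi_gfun (ν x : ℝ) (hν : 0 < ν) (hx : ν ≤ x) : π * (x * gfun (ν / x)) = bzphi ν x := by
  have hx0 : 0 < x := hν.trans_le hx
  have hp : 0 ≤ x ^ 2 - ν ^ 2 := by nlinarith
  have e : √(1 - (ν / x) ^ 2) = √(x ^ 2 - ν ^ 2) / x := by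
    have : 1 - (ν / x) ^ 2 = (x ^ 2 - ν ^ 2) / x ^ 2 := by field_simp
    rw [this, Real.sqrt_div hp, Real.sqrt_sq hx0.le]
  unfold gfun bzphi
  rw [e]
  have := Real.pi_pos
  field_simp

lemma bzphi_nu (ν : ℝ) (hν : 0 < ν) : bzphi ν ν = 0 := by
  unfold bzphi
  simp [div_self hν.ne']

lemma bzphi_cont (ν : ℝ) (hν : 0 < ν) : ContinuousOn (bzphi ν) (Set.Ici ν) := by
  unfold bzphi
  apply ContinuousOn.sub
  · exact (by fun_prop : Continuous fun x : ℝ => √(x ^ 2 - ν ^ 2)).continuousOn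
  · apply ContinuousOn.mul continuousOn_const
    apply Real.continuous_arccos.comp_continuousOn
    apply ContinuousOn.div continuousOn_const continuousOn_id
    intro x hx
    exact (hν.trans_le hx).ne'

lemma bzp_pos (ν x : ℝ) (hν : 0 < ν) (hx : ν < x) : 0 < bzp ν x := by
  have := bza_pos ν x hν hx
  have : 0 < x := hν.trans hx
  unfold bzp; positivity

lemma bzR_pos (ν x : ℝ) (hν : 0 < ν) (hx : ν < x) : 0 < bzR ν x := by
  have := bza_pos ν x hν hx
  have : 0 < x := hν.trans hx
  unfold bzR; positivity

lemma bzphi_strictMono (ν : ℝ) (hν : 0 < ν) : StrictMonoOn (bzphi ν) (Set.Ici ν) := by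
  apply strictMonoOn_of_hasDerivWithinAt_pos (convex_Ici ν) (f' := bzp ν) (bzphi_cont ν hν)
  · intro x hx
    rw [interior_Ici] at hx
    exact (bzphi_deriv ν x hν hx).hasDerivWithinAt
  · intro x hx
    rw [interior_Ici] at hx
    exact bzp_pos ν x hν hx

lemma bzA_deriv (ν x : ℝ) (hν : 3 < ν) (hx : ν < x) :
    HasDerivAt (bzA ν) (bzp ν x * bzB ν x) x := by
  have hν0 : 0 < ν := by linarith
  have hx0 : 0 < x := hν0.trans hx
  refine ((bza_deriv ν x hν0 hx).mul (bz_ode1 ν x hν hx0)).congr_deriv ?_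
  unfold bzp bzB
  have ha := bza_pos ν x hν0 hx
  field_simp

lemma bzB_deriv (ν x : ℝ) (hν : 3 < ν) (hx : ν < x) :
    HasDerivAt (bzB ν) (- (bzp ν x * (1 + bzR ν x) * bzA ν x)) x := by
  have hν0 : 0 < ν := by linarith
  have hx0 : 0 < x := hν0.trans hx
  have ha := bza_pos ν x hν0 hx
  have hd := bza_deriv ν x hν0 hx
  have h1 : HasDerivAt (fun x => x ^ 2 / (2 * bza ν x ^ 5))
      ((2 * x * (2 * bza ν x ^ 5) - x ^ 2 * (2 * (5 * bza ν x ^ 4 * (x / (2 * bza ν x ^ 3))))) /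
        (2 * bza ν x ^ 5) ^ 2) x := by
    refine ((hasDerivAt_pow 2 x).div ((hd.pow 5).const_mul 2)
      (mul_ne_zero two_ne_zero (pow_ne_zero 5 ha.ne'))).congr_deriv ?_
    simp
  have h2 : HasDerivAt (fun x => x / bza ν x)
      ((bza ν x - x * (x / (2 * bza ν x ^ 3))) / bza ν x ^ 2) x := by
    refine ((hasDerivAt_id x).div hd ha.ne').congr_deriv ?_
    simp
  refine ((h1.mul (bz_ode1 ν x hν hx0)).add (h2.mul (bz_ode2 ν x hν hx0))).congr_deriv ?_
  have e4 := bza_four ν x hν0 hx.le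
  have ode := bz_ode ν x hν hx0
  rw [← e4] at ode
  have hn : ν ^ 2 = x ^ 2 - bza ν x ^ 4 := by linarith
  have e2 : bzJ'' ν x = (- x * bzJ' ν x - bza ν x ^ 4 * besselJ ν x) / x ^ 2 := by
    field_simp; linarith
  unfold bzp bzR bzA
  rw [hn, e2]
  field_simp
  ring

noncomputable def bzrho (ν x : ℝ) : ℝ := bzA ν x ^ 2 + bzB ν x ^ 2

lemma bzrho_pos (ν x : ℝ) (hν : 3 < ν) (hx : ν < x) : 0 < bzrho ν x := by
  have hν0 : 0 < ν := by linarith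
  have hx0 : 0 < x := hν0.trans hx
  have ha := bza_pos ν x hν0 hx
  have hs := bz_simple ν hν x hx0
  by_contra hc
  have h0 : bzA ν x ^ 2 + bzB ν x ^ 2 ≤ 0 := not_lt.mp hc
  have hA : bzA ν x = 0 := by nlinarith [sq_nonneg (bzA ν x), sq_nonneg (bzB ν x)]
  have hB : bzB ν x = 0 := by nlinarith [sq_nonneg (bzA ν x), sq_nonneg (bzB ν x)]
  have hJ : besselJ ν x = 0 := by
    unfold bzA at hA
    exact (mul_eq_zero.mp hA).resolve_left ha.ne'
  unfold bzB at hB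
  rw [hJ, mul_zero, zero_add] at hB
  have hJ' : bzJ' ν x = 0 := (mul_eq_zero.mp hB).resolve_left (by positivity)
  rw [hJ, hJ'] at hs
  simp at hs

lemma bzrho_deriv (ν x : ℝ) (hν : 3 < ν) (hx : ν < x) :
    HasDerivAt (bzrho ν) (- (2 * (bzp ν x * bzR ν x * (bzA ν x * bzB ν x)))) x := by
  refine (((bzA_deriv ν x hν hx).pow 2).add ((bzB_deriv ν x hν hx).pow 2)).congr_deriv ?_
  simp
  ring

lemma bza_cont (ν : ℝ) : Continuous (bza ν) := by
  unfold bza; fun_prop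

noncomputable def bzom (ν x : ℝ) : ℝ := bzp ν x * (1 + bzR ν x * (bzA ν x ^ 2 / bzrho ν x))

lemma bzom_cont (ν : ℝ) (hν : 3 < ν) : ContinuousOn (bzom ν) (Set.Ioi ν) := by
  have hν0 : 0 < ν := by linarith
  have hA : ContinuousOn (bzA ν) (Set.Ioi ν) :=
    fun x hx => (bzA_deriv ν x hν hx).continuousAt.continuousWithinAt
  have hr : ContinuousOn (bzrho ν) (Set.Ioi ν) :=
    fun x hx => (bzrho_deriv ν x hν hx).continuousAt.continuousWithinAt
  have ha := (bza_cont ν).continuousOn (s := Set.Ioi ν)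
  unfold bzom bzp bzR
  apply ContinuousOn.mul
  · apply ContinuousOn.div (ha.pow 2) continuousOn_id
    intro x hx; exact (hν0.trans hx).ne'
  · apply ContinuousOn.add continuousOn_const
    apply ContinuousOn.mul
    · apply ContinuousOn.div (by fun_prop) (by fun_prop)
      intro x hx
      have := bza_pos ν x hν0 hx
      positivity
    · apply ContinuousOn.div (hA.pow 2) hr
      intro x hx
      exact ne_of_gt (bzrho_pos ν x hν hx)

/-! ### Part 6: the Prüfer phase -/

lemma bz_phase0 (ν : ℝ) (hν : 3 < ν) (x₀ ψ₀ : ℝ) (hx₀ : ν < x₀)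
    (h0 : bzA ν x₀ * Real.cos ψ₀ = bzB ν x₀ * Real.sin ψ₀) :
    ∃ ψ : ℝ → ℝ, ψ x₀ = ψ₀ ∧ ∀ x, ν < x →
      (HasDerivAt ψ (bzp ν x * (1 + bzR ν x * Real.sin (ψ x) ^ 2)) x ∧
      bzA ν x ^ 2 = bzrho ν x * Real.sin (ψ x) ^ 2) := by
  set ψ : ℝ → ℝ := fun x => ψ₀ + ∫ t in x₀..x, bzom ν t with hψ
  have hc := bzom_cont ν hν
  have hd : ∀ x, ν < x → HasDerivAt ψ (bzom ν x) x := by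
    intro x hx
    apply HasDerivAt.const_add
    apply intervalIntegral.integral_hasDerivAt_right
    · apply ContinuousOn.intervalIntegrable
      apply hc.mono
      intro t ht
      rw [Set.mem_uIcc] at ht
      rcases ht with h | h
      · exact hx₀.trans_le h.1
      · exact hx.trans_le h.1
    · exact hc.stronglyMeasurableAtFilter isOpen_Ioi x hx
    · exact hc.continuousAt (Ioi_mem_nhds hx)
  have hψ0 : ψ x₀ = ψ₀ := by simp [hψ]
  set P : ℝ → ℝ := fun x => bzA ν x * Real.cos (ψ x) - bzB ν x * Real.sin (ψ x) with hP
  have dP : ∀ x, ν < x → HasDerivAt (fun x => P x ^ 2 / bzrho ν x) 0 x := by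
    intro x hx
    have hr := bzrho_pos ν x hν hx
    have h1 := ((bzA_deriv ν x hν hx).mul (hd x hx).cos).sub
      ((bzB_deriv ν x hν hx).mul (hd x hx).sin)
    have h2 := (h1.pow 2).div (bzrho_deriv ν x hν hx) hr.ne'
    refine h2.congr_deriv ?_
    simp only [Pi.mul_apply, Pi.sub_apply, Pi.pow_apply]
    have hre : bzrho ν x = bzA ν x ^ 2 + bzB ν x ^ 2 := rfl
    unfold bzom
    rw [hre] at hr ⊢
    field_simp
    ring
  have hP0 : P x₀ = 0 := by simp only [hP, hψ0]; linarith
  have hPz : ∀ x, ν < x → P x = 0 := by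
    intro x hx
    have h := (convex_Ioi ν).norm_image_sub_le_of_norm_hasDerivWithin_le (C := 0)
      (f := fun x => P x ^ 2 / bzrho ν x) (f' := fun _ => 0)
      (fun z hz => (dP z hz).hasDerivWithinAt) (by simp) hx₀ hx
    rw [zero_mul] at h
    have h := norm_le_zero_iff.mp h
    have hr := bzrho_pos ν x hν hx
    have h3 : P x ^ 2 / bzrho ν x = 0 := by simpa [hP0] using h
    rcases div_eq_zero_iff.mp h3 with h4 | h4
    · exact pow_eq_zero_iff two_ne_zero |>.mp h4
    · exact absurd h4 hr.ne'
  have hA2 : ∀ x, ν < x → bzA ν x ^ 2 = bzrho ν x * Real.sin (ψ x) ^ 2 := by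
    intro x hx
    have h1 : bzA ν x * Real.cos (ψ x) = bzB ν x * Real.sin (ψ x) := by
      have := hPz x hx
      simp only [hP] at this
      linarith
    have h2 := Real.sin_sq_add_cos_sq (ψ x)
    unfold bzrho
    linear_combination (bzA ν x * Real.cos (ψ x) + bzB ν x * Real.sin (ψ x)) * h1 -
      bzA ν x ^ 2 * h2
  refine ⟨ψ, hψ0, fun x hx => ⟨?_, hA2 x hx⟩⟩
  refine (hd x hx).congr_deriv ?_
  have hr := bzrho_pos ν x hν hx
  unfold bzom
  rw [hA2 x hx, mul_div_cancel_left₀ _ hr.ne']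

lemma bz_phase (ν : ℝ) (hν : 3 < ν) : ∃ ψ : ℝ → ℝ,
    (∀ x, ν < x → HasDerivAt ψ (bzp ν x * (1 + bzR ν x * Real.sin (ψ x) ^ 2)) x) ∧
    (∀ x, ν < x → bzA ν x ^ 2 = bzrho ν x * Real.sin (ψ x) ^ 2) ∧
    (∀ x, ν < x → (besselJ ν x = 0 ↔ Real.sin (ψ x) = 0)) ∧
    (StrictMonoOn ψ (Set.Ioi ν)) ∧
    ∃ x₀, ν < x₀ ∧ ∀ x, ν < x → x ≤ x₀ → -π < ψ x ∧ ψ x < 0 := by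
  have hν0 : 0 < ν := by linarith
  have hJν := bz_nozero ν hν ν hν0 le_rfl
  have hev := (bz_ode1 ν ν hν hν0).continuousAt.eventually_ne hJν
  obtain ⟨ε, hε, hb⟩ := Metric.eventually_nhds_iff.mp hev
  set x₀ := ν + ε / 2 with hx₀
  have hx₀ν : ν < x₀ := by simp only [hx₀]; linarith
  have hJ : ∀ x, ν < x → x ≤ x₀ → besselJ ν x ≠ 0 := by
    intro x h1 h2
    apply hb
    rw [Real.dist_eq, abs_of_pos (by linarith)]
    simp only [hx₀] at h2; linarith
  have ha := bza_pos ν x₀ hν0 hx₀ν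
  have hA : bzA ν x₀ ≠ 0 := mul_ne_zero ha.ne' (hJ x₀ hx₀ν le_rfl)
  set t := - bzB ν x₀ / bzA ν x₀ with ht
  obtain ⟨ψ, hψ0, hψ⟩ := bz_phase0 ν hν x₀ (Real.arctan t - π / 2) hx₀ν (by
    rw [Real.cos_sub_pi_div_two, Real.sin_sub_pi_div_two, Real.sin_arctan, Real.cos_arctan]
    have : 0 < √(1 + t ^ 2) := by positivity
    have h2 : bzA ν x₀ * t = - bzB ν x₀ := by rw [ht]; field_simp
    field_simp
    linarith)
  have hsm : StrictMonoOn ψ (Set.Ioi ν) := by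
    apply strictMonoOn_of_hasDerivWithinAt_pos (convex_Ioi ν)
      (f' := fun x => bzp ν x * (1 + bzR ν x * Real.sin (ψ x) ^ 2))
    · exact fun x hx => (hψ x hx).1.continuousAt.continuousWithinAt
    · exact fun x hx => (hψ x (interior_subset hx)).1.hasDerivWithinAt
    · intro x hx
      have h1 : ν < x := interior_subset hx
      have := bzp_pos ν x hν0 h1
      have := bzR_pos ν x hν0 h1
      positivity
  have hz : ∀ x, ν < x → (besselJ ν x = 0 ↔ Real.sin (ψ x) = 0) := by
    intro x hx
    have h1 := (hψ x hx).2
    have hr := bzrho_pos ν x hν hx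
    have hax := bza_pos ν x hν0 hx
    constructor
    · intro h
      unfold bzA at h1
      rw [h] at h1
      simp only [mul_zero] at h1
      have : Real.sin (ψ x) ^ 2 = 0 := by
        have h3 : bzrho ν x * Real.sin (ψ x) ^ 2 = 0 := by rw [← h1]; norm_num
        exact (mul_eq_zero.mp h3).resolve_left hr.ne'
      exact pow_eq_zero_iff two_ne_zero |>.mp this
    · intro h
      rw [h] at h1
      have h2 : bzA ν x = 0 := by
        apply pow_eq_zero_iff two_ne_zero |>.mp
        rw [h1]; ring
      exact (mul_eq_zero.mp h2).resolve_left hax.ne'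
  refine ⟨ψ, fun x hx => (hψ x hx).1, fun x hx => (hψ x hx).2, hz, hsm, x₀, hx₀ν, ?_⟩
  intro x hx hxx
  have hu : ψ x < 0 := by
    have h1 := hsm.monotoneOn hx hx₀ν hxx
    have h2 := Real.arctan_lt_pi_div_two t
    rw [hψ0] at h1
    linarith
  refine ⟨?_, hu⟩
  by_contra hc
  have hc' : ψ x ≤ -π := not_lt.mp hc
  have hcont : ContinuousOn ψ (Set.Icc x x₀) :=
    fun z hz => (hψ z (hx.trans_le hz.1)).1.continuousAt.continuousWithinAt
  have hl : -π ≤ ψ x₀ := by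
    rw [hψ0]
    have h2 := Real.neg_pi_div_two_lt_arctan t
    linarith
  obtain ⟨z, hz1, hz2⟩ := intermediate_value_Icc hxx hcont ⟨hc', hl⟩
  apply hJ z (hx.trans_le hz1.1) hz1.2
  rw [hz z (hx.trans_le hz1.1), hz2]
  simp

/-! ### Part 7: bounds for the phase -/

lemma bzp_lower (ν x q : ℝ) (hν : 0 < ν) (hx : ν < x) (hq : 0 ≤ q)
    (h : ν ^ 2 ≤ x ^ 2 * (1 - q ^ 2)) : q ≤ bzp ν x := by
  have hx0 : 0 < x := hν.trans hx
  unfold bzp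
  rw [bza_sq, le_div_iff₀ hx0]
  apply Real.le_sqrt_of_sq_le
  nlinarith

lemma bzp_le_one (ν x : ℝ) (hν : 0 < ν) (hx : ν < x) : bzp ν x ≤ 1 := by
  have hx0 : 0 < x := hν.trans hx
  unfold bzp
  rw [bza_sq, div_le_one hx0]
  apply Real.sqrt_le_iff.mpr
  exact ⟨hx0.le, by nlinarith⟩

lemma bzphi_diff (ν u v q : ℝ) (hν : 0 < ν) (hu : ν < u) (huv : u ≤ v) (hq : 0 ≤ q) (hq1 : q ≤ 1)
    (h : ν ^ 2 ≤ u ^ 2 * (1 - q ^ 2)) : q * (v - u) ≤ bzphi ν v - bzphi ν u := by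
  have hd : ∀ x ∈ Set.Ici u, HasDerivAt (fun x => bzphi ν x - q * x) (bzp ν x - q) x := by
    intro x hx
    exact ((bzphi_deriv ν x hν (hu.trans_le hx)).sub ((hasDerivAt_id x).const_mul q)).congr_deriv
      (by simp)
  have hm : MonotoneOn (fun x => bzphi ν x - q * x) (Set.Ici u) := by
    apply monotoneOn_of_hasDerivWithinAt_nonneg (convex_Ici u) (f' := fun x => bzp ν x - q)
    · exact fun x hx => (hd x hx).continuousAt.continuousWithinAt
    · exact fun x hx => (hd x (interior_subset hx)).hasDerivWithinAt
    · intro x hx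
      have h1 : u ≤ x := interior_subset hx
      have h2 := bzp_lower ν x q hν (hu.trans_le h1) hq (by
        have : u ^ 2 ≤ x ^ 2 := pow_le_pow_left₀ (hν.trans hu).le h1 2
        have h9 : 0 ≤ 1 - q ^ 2 := by nlinarith
        have := mul_le_mul_of_nonneg_right this h9
        linarith)
      linarith
  have := hm (Set.mem_Ici.mpr le_rfl) (Set.mem_Ici.mpr huv) huv
  simp only at this
  linarith

lemma bzphi_pos (ν x : ℝ) (hν : 0 < ν) (hx : ν < x) : 0 < bzphi ν x := by
  have := bzphi_strictMono ν hν (Set.mem_Ici.mpr le_rfl) (Set.mem_Ici.mpr hx.le) hx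
  rwa [bzphi_nu ν hν] at this

lemma bzphi_upper (ν x : ℝ) (hν : 0 < ν) (hx : ν ≤ x) : bzphi ν x ≤ bza ν x ^ 6 / (3 * ν ^ 2) := by
  have hm : MonotoneOn (fun x => bza ν x ^ 6 / (3 * ν ^ 2) - bzphi ν x) (Set.Ici ν) := by
    apply monotoneOn_of_hasDerivWithinAt_nonneg (convex_Ici ν)
      (f' := fun x => bza ν x ^ 2 * x / ν ^ 2 - bzp ν x)
    · exact (((bza_cont ν).pow 6).div_const _).continuousOn.sub (bzphi_cont ν hν)
    · intro x hx
      rw [interior_Ici] at hx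
      have ha := bza_pos ν x hν hx
      refine HasDerivAt.hasDerivWithinAt ?_
      refine ((((bza_deriv ν x hν hx).pow 6).div_const _).sub (bzphi_deriv ν x hν hx)).congr_deriv ?_
      congr 1
      field_simp
      norm_num
      ring
    · intro x hx
      rw [interior_Ici] at hx
      have hx : ν < x := hx
      have hx0 : 0 < x := hν.trans hx
      have ha := bza_pos ν x hν hx
      unfold bzp
      rw [sub_nonneg, div_le_div_iff₀ hx0 (by positivity)]
      have : ν ^ 2 ≤ x ^ 2 := pow_le_pow_left₀ hν.le hx.le 2
      have := mul_le_mul_of_nonneg_left this (sq_nonneg (bza ν x))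
      linarith
  have h := hm (Set.mem_Ici.mpr le_rfl) (Set.mem_Ici.mpr hx) hx
  have h0 : bza ν ν = 0 := by simp [bza]
  simp only [bzphi_nu ν hν, h0] at h
  have e : (0:ℝ) ^ 6 / (3 * ν ^ 2) - 0 = 0 := by simp
  linarith

lemma bzRphi (ν x : ℝ) (hν : 0 < ν) (hx : ν < x) (hx1 : x ≤ 11 / 10 * ν) :
    bzR ν x * bzphi ν x ^ 2 < 3 / 16 := by
  have ha := bza_pos ν x hν hx
  have h1 := bzphi_upper ν x hν hx.le
  have h0 := bzphi_pos ν x hν hx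
  have hR := bzR_pos ν x hν hx
  have h2 : bzphi ν x ^ 2 ≤ (bza ν x ^ 6 / (3 * ν ^ 2)) ^ 2 := pow_le_pow_left₀ h0.le h1 2
  have hx2 : x ^ 2 ≤ 121 / 100 * ν ^ 2 := by nlinarith
  have e : bzR ν x * (bza ν x ^ 6 / (3 * ν ^ 2)) ^ 2 = x ^ 2 * (x ^ 2 + 4 * ν ^ 2) / (36 * ν ^ 4) := by
    unfold bzR
    field_simp
    norm_num
    ring
  calc bzR ν x * bzphi ν x ^ 2 ≤ bzR ν x * (bza ν x ^ 6 / (3 * ν ^ 2)) ^ 2 := by gcongr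
    _ = x ^ 2 * (x ^ 2 + 4 * ν ^ 2) / (36 * ν ^ 4) := e
    _ < 3 / 16 := by
      rw [div_lt_iff₀ (by positivity)]
      have h4 : 0 < ν ^ 4 := by positivity
      have h5 : x ^ 2 * (x ^ 2 + 4 * ν ^ 2) ≤ (121 / 100 * ν ^ 2) * (121 / 100 * ν ^ 2 + 4 * ν ^ 2) := by
        gcongr
      nlinarith

lemma bzR_far (ν x : ℝ) (hν : 0 < ν) (hx1 : 11 / 10 * ν ≤ x) : bzR ν x ≤ 270 / x ^ 2 := by
  have hx : ν < x := by linarith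
  have hx0 : 0 < x := by linarith
  have h4 := bza_four ν x hν hx.le
  have ha := bza_pos ν x hν hx
  have hn : ν ^ 2 ≤ 5 / 6 * x ^ 2 := by nlinarith
  have h5 : x ^ 2 / 6 ≤ bza ν x ^ 4 := by linarith
  have h6 : (x ^ 2 / 6) ^ 3 ≤ bza ν x ^ 12 := by
    calc (x ^ 2 / 6) ^ 3 ≤ (bza ν x ^ 4) ^ 3 := pow_le_pow_left₀ (by positivity) h5 3
      _ = _ := by ring
  have hn2 : ν ^ 2 ≤ x ^ 2 := pow_le_pow_left₀ hν.le hx.le 2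
  unfold bzR
  rw [div_le_div_iff₀ (by positivity) (by positivity)]
  calc x ^ 2 * (x ^ 2 + 4 * ν ^ 2) * x ^ 2 ≤ x ^ 2 * (x ^ 2 + 4 * x ^ 2) * x ^ 2 := by gcongr
    _ = 270 * (4 * (x ^ 2 / 6) ^ 3) := by ring
    _ ≤ _ := by gcongr

lemma bz_sin_sq_le (y : ℝ) : Real.sin y ^ 2 ≤ y ^ 2 := by
  have := Real.abs_sin_le_abs (x := y)
  exact sq_le_sq.mpr this

lemma bz_mono (ν : ℝ) (hν : 3 < ν) (ψ : ℝ → ℝ)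
    (hd : ∀ x, ν < x → HasDerivAt ψ (bzp ν x * (1 + bzR ν x * Real.sin (ψ x) ^ 2)) x) :
    MonotoneOn (fun x => ψ x - bzphi ν x) (Set.Ioi ν) := by
  have hν0 : 0 < ν := by linarith
  have h : ∀ x ∈ Set.Ioi ν, HasDerivAt (fun x => ψ x - bzphi ν x)
      (bzp ν x * (bzR ν x * Real.sin (ψ x) ^ 2)) x := by
    intro x hx
    exact ((hd x hx).sub (bzphi_deriv ν x hν0 hx)).congr_deriv (by ring)
  apply monotoneOn_of_hasDerivWithinAt_nonneg (convex_Ioi ν)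
    (f' := fun x => bzp ν x * (bzR ν x * Real.sin (ψ x) ^ 2))
  · exact fun x hx => (h x hx).continuousAt.continuousWithinAt
  · exact fun x hx => (h x (interior_subset hx)).hasDerivWithinAt
  · intro x hx
    have h1 : ν < x := interior_subset hx
    have := bzp_pos ν x hν0 h1
    have := bzR_pos ν x hν0 h1
    positivity

lemma bz_lower (ν : ℝ) (hν : 3 < ν) (ψ : ℝ → ℝ)
    (hd : ∀ x, ν < x → HasDerivAt ψ (bzp ν x * (1 + bzR ν x * Real.sin (ψ x) ^ 2)) x)
    (x₀ : ℝ) (hx₀ : ν < x₀) (h0 : ∀ x, ν < x → x ≤ x₀ → -π < ψ x ∧ ψ x < 0) :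
    ∀ x, ν < x → -π ≤ ψ x - bzphi ν x := by
  intro x hx
  have hν0 : 0 < ν := by linarith
  by_contra hc
  have hc' := not_le.mp hc
  have hcont : Filter.Tendsto (bzphi ν) (nhdsWithin ν (Set.Ioi ν)) (nhds 0) := by
    have := (bzphi_cont ν hν0 ν (Set.mem_Ici.mpr le_rfl)).mono Set.Ioi_subset_Ici_self
    unfold ContinuousWithinAt at this
    rwa [bzphi_nu ν hν0] at this
  have e1 : ∀ᶠ z in nhdsWithin ν (Set.Ioi ν), bzphi ν z < -π - (ψ x - bzphi ν x) :=
    hcont.eventually_lt_const (by linarith)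
  have e2 : ∀ᶠ z in nhdsWithin ν (Set.Ioi ν), z ∈ Set.Ioo ν (min x x₀) :=
    Ioo_mem_nhdsGT (lt_min hx hx₀)
  obtain ⟨z, hz1, hz2⟩ := (e1.and e2).exists
  have h1 := bz_mono ν hν ψ hd hz2.1 hx (hz2.2.le.trans (min_le_left _ _))
  have h2 := (h0 z hz2.1 (hz2.2.le.trans (min_le_right _ _))).1
  simp only at h1
  linarith

lemma bz_barrier (ν : ℝ) (hν : 3 < ν) (ψ : ℝ → ℝ)
    (hd : ∀ x, ν < x → HasDerivAt ψ (bzp ν x * (1 + bzR ν x * Real.sin (ψ x) ^ 2)) x)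
    (x₀ : ℝ) (hx₀ : ν < x₀) (h0 : ∀ x, ν < x → x ≤ x₀ → -π < ψ x ∧ ψ x < 0) :
    ∀ x, ν < x → x ≤ 11 / 10 * ν → ψ x ≤ 4 / 3 * bzphi ν x := by
  intro x hx hx1
  have hν0 : 0 < ν := by linarith
  rcases le_total x x₀ with h | h
  · have := (h0 x hx h).2
    have := bzphi_pos ν x hν0 hx
    linarith
  have hdB : ∀ z, ν < z → HasDerivAt (fun z => 4 / 3 * bzphi ν z) (4 / 3 * bzp ν z) z :=
    fun z hz => (bzphi_deriv ν z hν0 hz).const_mul _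
  refine image_le_of_deriv_right_lt_deriv_boundary' (a := x₀) (b := x) (f := ψ)
    (f' := fun x => bzp ν x * (1 + bzR ν x * Real.sin (ψ x) ^ 2))
    (B := fun z => 4 / 3 * bzphi ν z) (B' := fun z => 4 / 3 * bzp ν z)
    ?_ ?_ ?_ ?_ ?_ ?_ ⟨h, le_rfl⟩
  · exact fun z hz => (hd z (hx₀.trans_le hz.1)).continuousAt.continuousWithinAt
  · exact fun z hz => (hd z (hx₀.trans_le hz.1)).hasDerivWithinAt
  · have := (h0 x₀ hx₀ le_rfl).2
    have := bzphi_pos ν x₀ hν0 hx₀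
    linarith
  · exact fun z hz => (hdB z (hx₀.trans_le hz.1)).continuousAt.continuousWithinAt
  · exact fun z hz => (hdB z (hx₀.trans_le hz.1)).hasDerivWithinAt
  · intro z hz hzB
    have hz0 : ν < z := hx₀.trans_le hz.1
    have hp := bzp_pos ν z hν0 hz0
    have hR := bzR_pos ν z hν0 hz0
    have h1 := bzRphi ν z hν0 hz0 (hz.2.le.trans hx1)
    have h2 := bz_sin_sq_le (ψ z)
    rw [hzB] at h2
    have h3 := mul_le_mul_of_nonneg_left h2 hR.le
    have h4 : 1 + bzR ν z * Real.sin (ψ z) ^ 2 < 4 / 3 := by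
      rw [hzB]
      nlinarith
    have := mul_lt_mul_of_pos_left h4 hp
    linarith

lemma bz_upper (ν : ℝ) (hν : 10000 < ν) (ψ : ℝ → ℝ)
    (hd : ∀ x, ν < x → HasDerivAt ψ (bzp ν x * (1 + bzR ν x * Real.sin (ψ x) ^ 2)) x)
    (x₀ : ℝ) (hx₀ : ν < x₀) (h0 : ∀ x, ν < x → x ≤ x₀ → -π < ψ x ∧ ψ x < 0) :
    ψ (11 / 10 * ν) - bzphi ν (11 / 10 * ν) ≤ 1 / 2 := by
  have hν0 : 0 < ν := by linarith
  have hφ1 : 3 / 4 ≤ bzphi ν (11 / 10 * ν) := by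
    have h1 := bzphi_diff ν (21 / 20 * ν) (11 / 10 * ν) (3 / 10) hν0 (by linarith) (by linarith)
      (by norm_num) (by norm_num) (by nlinarith)
    have h2 := bzphi_pos ν (21 / 20 * ν) hν0 (by linarith)
    linarith
  obtain ⟨y, hy, hφy⟩ := intermediate_value_Icc (by linarith : ν ≤ 11 / 10 * ν)
    ((bzphi_cont ν hν0).mono Set.Icc_subset_Ici_self)
    (by rw [bzphi_nu ν hν0]; exact ⟨by norm_num, hφ1⟩ : (3 / 4 : ℝ) ∈ _)
  have hyν : ν < y := by
    rcases hy.1.lt_or_eq with h | h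
    · exact h
    · rw [← h, bzphi_nu ν hν0] at hφy; norm_num at hφy
  have hb := bz_barrier ν (by linarith) ψ hd x₀ hx₀ h0 y hyν hy.2
  have hdf : ∀ z ∈ Set.Icc y (11 / 10 * ν), HasDerivAt
      (fun z => ψ z - bzphi ν z + 3 / 16 * (bzphi ν z)⁻¹)
      (bzp ν z * (bzR ν z * Real.sin (ψ z) ^ 2) - 3 / 16 * (bzp ν z / bzphi ν z ^ 2)) z := by
    intro z hz
    have hz0 := hyν.trans_le hz.1
    have h1 := bzphi_deriv ν z hν0 hz0
    have h2 := bzphi_pos ν z hν0 hz0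
    exact (((hd z hz0).sub h1).add ((h1.inv h2.ne').const_mul (3 / 16))).congr_deriv (by ring)
  have ham : AntitoneOn (fun z => ψ z - bzphi ν z + 3 / 16 * (bzphi ν z)⁻¹)
      (Set.Icc y (11 / 10 * ν)) := by
    apply antitoneOn_of_hasDerivWithinAt_nonpos (convex_Icc _ _) (f' := fun z =>
      bzp ν z * (bzR ν z * Real.sin (ψ z) ^ 2) - 3 / 16 * (bzp ν z / bzphi ν z ^ 2))
    · exact fun z hz => (hdf z hz).continuousAt.continuousWithinAt
    · exact fun z hz => (hdf z (interior_subset hz)).hasDerivWithinAt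
    · intro z hz
      have hz' := interior_subset hz
      have hz0 := hyν.trans_le hz'.1
      have hp := bzp_pos ν z hν0 hz0
      have hR := bzR_pos ν z hν0 hz0
      have h2 := bzphi_pos ν z hν0 hz0
      have h1 := bzRphi ν z hν0 hz0 hz'.2
      have h3 : bzR ν z * Real.sin (ψ z) ^ 2 ≤ 3 / 16 / bzphi ν z ^ 2 := by
        rw [le_div_iff₀ (by positivity)]
        have h4 := Real.sin_sq_le_one (ψ z)
        have h5 : 0 < bzR ν z * bzphi ν z ^ 2 := by positivity
        nlinarith
      have h6 := mul_le_mul_of_nonneg_left h3 hp.le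
      have e : bzp ν z * (3 / 16 / bzphi ν z ^ 2) = 3 / 16 * (bzp ν z / bzphi ν z ^ 2) := by ring
      linarith
  have h := ham ⟨le_rfl, hy.2⟩ ⟨hy.2, le_rfl⟩ hy.2
  simp only [hφy] at h
  have h7 : 0 < (bzphi ν (11 / 10 * ν))⁻¹ := by
    have := bzphi_pos ν (11 / 10 * ν) hν0 (by linarith)
    positivity
  rw [hφy] at hb
  norm_num at h
  linarith

lemma bz_anti (ν : ℝ) (hν : 10000 < ν) (ψ : ℝ → ℝ)
    (hd : ∀ x, ν < x → HasDerivAt ψ (bzp ν x * (1 + bzR ν x * Real.sin (ψ x) ^ 2)) x) :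
    AntitoneOn (fun x => ψ x - bzphi ν x + 270 * x⁻¹) (Set.Ici (11 / 10 * ν)) := by
  have hν0 : 0 < ν := by linarith
  have h : ∀ x ∈ Set.Ici (11 / 10 * ν), HasDerivAt (fun x => ψ x - bzphi ν x + 270 * x⁻¹)
      (bzp ν x * (bzR ν x * Real.sin (ψ x) ^ 2) - 270 / x ^ 2) x := by
    intro x hx
    have hx' : 11 / 10 * ν ≤ x := hx
    have hx0 : ν < x := by linarith
    exact (((hd x hx0).sub (bzphi_deriv ν x hν0 hx0)).add
      ((hasDerivAt_inv (hν0.trans hx0).ne').const_mul 270)).congr_deriv (by ring)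
  apply antitoneOn_of_hasDerivWithinAt_nonpos (convex_Ici _)
    (f' := fun x => bzp ν x * (bzR ν x * Real.sin (ψ x) ^ 2) - 270 / x ^ 2)
  · exact fun x hx => (h x hx).continuousAt.continuousWithinAt
  · exact fun x hx => (h x (interior_subset hx)).hasDerivWithinAt
  · intro x hx
    have hx' : 11 / 10 * ν ≤ x := interior_subset hx
    have hx0 : ν < x := by linarith
    have h1 := bzp_pos ν x hν0 hx0
    have h2 := bzR_pos ν x hν0 hx0
    have h3 := bzR_far ν x hν0 hx'
    have h4 := Real.sin_sq_le_one (ψ x)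
    have h5 := bzp_le_one ν x hν0 hx0
    have h6 : bzR ν x * Real.sin (ψ x) ^ 2 ≤ 270 / x ^ 2 := by nlinarith
    have h7 : 0 ≤ bzR ν x * Real.sin (ψ x) ^ 2 := by positivity
    nlinarith

lemma bz_limit (ν : ℝ) (hν : 10000 < ν) (ψ : ℝ → ℝ)
    (hd : ∀ x, ν < x → HasDerivAt ψ (bzp ν x * (1 + bzR ν x * Real.sin (ψ x) ^ 2)) x)
    (x₀ : ℝ) (hx₀ : ν < x₀) (h0 : ∀ x, ν < x → x ≤ x₀ → -π < ψ x ∧ ψ x < 0) :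
    ∃ L : ℝ, Filter.Tendsto (fun x => ψ x - bzphi ν x) Filter.atTop (nhds L) ∧ -π ≤ L ∧
      L < π / 4 ∧ ∀ x, 11 / 10 * ν ≤ x → ψ x - bzphi ν x ≤ L ∧ L ≤ ψ x - bzphi ν x + 270 * x⁻¹ := by
  have hν0 : 0 < ν := by linarith
  set x₁ := 11 / 10 * ν with hx₁
  have hx₁ν : ν < x₁ := by simp only [hx₁]; linarith
  have hx₁0 : 0 < x₁ := hν0.trans hx₁ν
  have hmo := bz_mono ν (by linarith) ψ hd
  have han := bz_anti ν hν ψ hd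
  have hlo := bz_lower ν (by linarith) ψ hd x₀ hx₀ h0
  have hup := bz_upper ν hν ψ hd x₀ hx₀ h0
  set f : ℝ → ℝ := fun x => ψ x - bzphi ν x with hf
  have hbd : ∀ x, x₁ ≤ x → f x ≤ f x₁ + 270 * x₁⁻¹ := by
    intro x hx
    have h1 := han (Set.mem_Ici.mpr le_rfl) (Set.mem_Ici.mpr hx) hx
    have h2 : 0 < x⁻¹ := by have := hx₁0.trans_le hx; positivity
    simp only at h1
    simp only [hf]
    linarith
  have hmono : Monotone (fun x => f (max x x₁)) := by
    intro a b hab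
    exact hmo (hx₁ν.trans_le (le_max_right _ _)) (hx₁ν.trans_le (le_max_right _ _))
      (max_le_max_right _ hab)
  have hbdd : BddAbove (Set.range (fun x => f (max x x₁))) :=
    ⟨_, by rintro _ ⟨x, rfl⟩; exact hbd _ (le_max_right _ _)⟩
  have ht := tendsto_atTop_ciSup hmono hbdd
  set L := ⨆ x, f (max x x₁) with hL
  have htf : Filter.Tendsto f Filter.atTop (nhds L) := by
    apply ht.congr'
    filter_upwards [Filter.eventually_ge_atTop x₁] with x hx
    rw [max_eq_left hx]
  have hinv : Filter.Tendsto (fun x : ℝ => 270 * x⁻¹) Filter.atTop (nhds 0) := by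
    simpa using tendsto_inv_atTop_zero.const_mul (270:ℝ)
  have htg : Filter.Tendsto (fun x => f x + 270 * x⁻¹) Filter.atTop (nhds L) := by
    simpa using htf.add hinv
  have hfL : ∀ x, x₁ ≤ x → f x ≤ L ∧ L ≤ f x + 270 * x⁻¹ := by
    intro x hx
    constructor
    · apply ge_of_tendsto htf
      filter_upwards [Filter.eventually_ge_atTop x] with z hz
      exact hmo (hx₁ν.trans_le hx) (hx₁ν.trans_le (hx.trans hz)) hz
    · apply le_of_tendsto htg
      filter_upwards [Filter.eventually_ge_atTop x] with z hz
      exact han (Set.mem_Ici.mpr hx) (Set.mem_Ici.mpr (hx.trans hz)) hz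
  refine ⟨L, htf, ?_, ?_, hfL⟩
  · exact (hlo x₁ hx₁ν).trans (hfL x₁ le_rfl).1
  · have h1 := (hfL x₁ le_rfl).2
    have h2 : x₁⁻¹ ≤ 1 / 11000 := by
      rw [inv_eq_one_div]
      apply one_div_le_one_div_of_le (by norm_num)
      simp only [hx₁]; linarith
    have h3 := Real.pi_gt_three
    have h4 : f x₁ ≤ 1 / 2 := hup
    linarith

/-! ### Part 8: the limiting phase, counting, conclusion -/

lemma bzrho_lower (ν : ℝ) (hν : 10000 < ν) : ∃ κ : ℝ, 0 < κ ∧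
    ∀ x, 11 / 10 * ν ≤ x → κ ≤ bzrho ν x := by
  have hν0 : 0 < ν := by linarith
  have hν3 : 3 < ν := by linarith
  have hd : ∀ x ∈ Set.Ici (11 / 10 * ν), HasDerivAt
      (fun x => bzrho ν x * Real.exp (-270 * x⁻¹))
      ((- (2 * (bzp ν x * bzR ν x * (bzA ν x * bzB ν x))) + 270 / x ^ 2 * bzrho ν x) *
        Real.exp (-270 * x⁻¹)) x := by
    intro x hx
    have hx' : 11 / 10 * ν ≤ x := hx
    have hx0 : ν < x := by linarith
    have h1 := ((hasDerivAt_inv (hν0.trans hx0).ne').const_mul (-270)).exp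
    exact ((bzrho_deriv ν x hν3 hx0).mul h1).congr_deriv (by ring)
  have hm : MonotoneOn (fun x => bzrho ν x * Real.exp (-270 * x⁻¹)) (Set.Ici (11 / 10 * ν)) := by
    apply monotoneOn_of_hasDerivWithinAt_nonneg (convex_Ici _) (f' := fun x =>
      (- (2 * (bzp ν x * bzR ν x * (bzA ν x * bzB ν x))) + 270 / x ^ 2 * bzrho ν x) *
        Real.exp (-270 * x⁻¹))
    · exact fun x hx => (hd x hx).continuousAt.continuousWithinAt
    · exact fun x hx => (hd x (interior_subset hx)).hasDerivWithinAt
    · intro x hx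
      have hx' : 11 / 10 * ν ≤ x := interior_subset hx
      have hx0 : ν < x := by linarith
      apply mul_nonneg _ (Real.exp_pos _).le
      have h1 := bzp_pos ν x hν0 hx0
      have h2 := bzR_pos ν x hν0 hx0
      have h3 := bzR_far ν x hν0 hx'
      have h5 := bzp_le_one ν x hν0 hx0
      have h6 : bzp ν x * bzR ν x ≤ 270 / x ^ 2 := by nlinarith
      have h7 : 2 * (bzA ν x * bzB ν x) ≤ bzrho ν x := by
        unfold bzrho; nlinarith [sq_nonneg (bzA ν x - bzB ν x)]
      have h8 := bzrho_pos ν x hν3 hx0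
      have h9 : bzp ν x * bzR ν x * (2 * (bzA ν x * bzB ν x)) ≤ bzp ν x * bzR ν x * bzrho ν x :=
        mul_le_mul_of_nonneg_left h7 (by positivity)
      have h10 := mul_le_mul_of_nonneg_right h6 h8.le
      linarith
  have hr := bzrho_pos ν (11 / 10 * ν) hν3 (by linarith)
  refine ⟨bzrho ν (11 / 10 * ν) * Real.exp (-270 * (11 / 10 * ν)⁻¹),
    mul_pos hr (Real.exp_pos _), ?_⟩
  intro x hx
  have h1 := hm (Set.mem_Ici.mpr le_rfl) (Set.mem_Ici.mpr hx) hx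
  simp only at h1
  refine h1.trans ?_
  have hx0 : ν < x := by linarith
  have h8 := bzrho_pos ν x hν3 hx0
  have h9 : Real.exp (-270 * x⁻¹) ≤ 1 := by
    apply Real.exp_le_one_iff.mpr
    have : 0 < x⁻¹ := by have := hν0.trans hx0; positivity
    linarith
  nlinarith

lemma bzphi_asymp (ν : ℝ) (hν : 0 < ν) :
    Filter.Tendsto (fun y => bzphi ν y - (y - ν * π / 2)) Filter.atTop (nhds 0) := by
  have hdiv : Filter.Tendsto (fun y : ℝ => ν / y) Filter.atTop (nhds 0) :=
    Filter.Tendsto.const_div_atTop Filter.tendsto_id ν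
  have h1 : Filter.Tendsto (fun y : ℝ => ν * Real.arcsin (ν / y)) Filter.atTop (nhds 0) := by
    have := ((Real.continuous_arcsin.tendsto 0).comp hdiv).const_mul ν
    simpa using this
  have h2 : Filter.Tendsto (fun y : ℝ => √(y ^ 2 - ν ^ 2) - y) Filter.atTop (nhds 0) := by
    have h3 : Filter.Tendsto (fun y : ℝ => -(ν * (ν / y))) Filter.atTop (nhds 0) := by
      simpa using (hdiv.const_mul ν).neg
    apply tendsto_of_tendsto_of_tendsto_of_le_of_le' h3 tendsto_const_nhds
    · filter_upwards [Filter.eventually_gt_atTop ν] with y hy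
      have hy0 : 0 < y := hν.trans hy
      have hs := Real.sqrt_nonneg (y ^ 2 - ν ^ 2)
      have hs2 := Real.sq_sqrt (by nlinarith : 0 ≤ y ^ 2 - ν ^ 2)
      have hle : √(y ^ 2 - ν ^ 2) ≤ y := Real.sqrt_le_iff.mpr ⟨hy0.le, by nlinarith⟩
      set S := √(y ^ 2 - ν ^ 2)
      have : (y - S) * y ≤ ν * ν := by nlinarith
      have h4 : y - S ≤ ν * ν / y := (le_div_iff₀ hy0).mpr this
      have e : ν * (ν / y) = ν * ν / y := by ring
      rw [e]
      linarith
    · filter_upwards [Filter.eventually_gt_atTop ν] with y hy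
      have hy0 : 0 < y := hν.trans hy
      have hle : √(y ^ 2 - ν ^ 2) ≤ y := Real.sqrt_le_iff.mpr ⟨hy0.le, by nlinarith⟩
      linarith
  have h3 := h2.add h1
  rw [add_zero] at h3
  refine h3.congr ?_
  intro y
  unfold bzphi
  rw [Real.arccos_eq_pi_div_two_sub_arcsin]
  ring

lemma bz_L (ν : ℝ) (hν : 10000 < ν) (ψ : ℝ → ℝ)
    (hA : ∀ x, ν < x → bzA ν x ^ 2 = bzrho ν x * Real.sin (ψ x) ^ 2)
    (L : ℝ) (hL : Filter.Tendsto (fun x => ψ x - bzphi ν x) Filter.atTop (nhds L))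
    (hL1 : -π ≤ L) (hL2 : L < π / 4) : L = -(3 * π / 4) := by
  have hν0 : 0 < ν := by linarith
  have hπ := Real.pi_pos
  obtain ⟨M, hM⟩ := bz_asymp ν (by linarith)
  obtain ⟨κ, hκ, hρ⟩ := bzrho_lower ν hν
  set y : ℕ → ℝ := fun n => ν * π / 2 + 3 * π / 4 + n * π with hy
  have hyt : Filter.Tendsto y Filter.atTop Filter.atTop := by
    apply Filter.tendsto_atTop_add_const_left
    exact tendsto_natCast_atTop_atTop.atTop_mul_const hπ
  have hy1 : ∀ n, 11 / 10 * ν ≤ y n := by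
    intro n
    have : 0 ≤ (n : ℝ) * π := by positivity
    simp only [hy]
    nlinarith [Real.pi_gt_three]
  have hb : ∀ n, Real.sin (ψ (y n)) ^ 2 ≤ (M / π) ^ 2 / κ * (y n)⁻¹ := by
    intro n
    have h1 := hy1 n
    have hyν : ν < y n := by linarith
    have hy0 : 0 < y n := hν0.trans hyν
    have h2 := hM (y n) hy0
    have hcs : Real.cos (y n - ν * π / 2) + Real.sin (y n - ν * π / 2) = 0 := by
      have e : y n - ν * π / 2 = 3 * π / 4 + n * π := by simp only [hy]; ring
      have e2 : 3 * π / 4 = π - π / 4 := by ring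
      rw [e, Real.cos_add_nat_mul_pi, Real.sin_add_nat_mul_pi, e2, Real.cos_pi_sub, Real.sin_pi_sub,
        Real.cos_pi_div_four, Real.sin_pi_div_four]
      ring
    rw [hcs, mul_zero, sub_zero] at h2
    have hsy : 0 < √(y n) := Real.sqrt_pos.mpr hy0
    have h3 : (π * (√(y n) * besselJ ν (y n))) ^ 2 ≤ (M / √(y n)) ^ 2 := by
      rw [← sq_abs]
      exact pow_le_pow_left₀ (abs_nonneg _) h2 2
    rw [mul_pow, mul_pow, div_pow, Real.sq_sqrt hy0.le] at h3
    have h4 := hA (y n) hyν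
    have h5 := hρ (y n) h1
    have h6 : bzA ν (y n) ^ 2 ≤ y n * besselJ ν (y n) ^ 2 := by
      unfold bzA
      rw [mul_pow, bza_sq]
      have hle : √(y n ^ 2 - ν ^ 2) ≤ y n := Real.sqrt_le_iff.mpr ⟨hy0.le, by nlinarith⟩
      gcongr
    have h7 : κ * Real.sin (ψ (y n)) ^ 2 ≤ bzrho ν (y n) * Real.sin (ψ (y n)) ^ 2 := by gcongr
    have h8 : κ * Real.sin (ψ (y n)) ^ 2 ≤ y n * besselJ ν (y n) ^ 2 := by linarith
    have h9 : π ^ 2 * (κ * Real.sin (ψ (y n)) ^ 2) ≤ M ^ 2 / y n :=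
      (mul_le_mul_of_nonneg_left h8 (by positivity)).trans h3
    have e : (M / π) ^ 2 / κ * (y n)⁻¹ = (M ^ 2 / y n) / (π ^ 2 * κ) := by
      field_simp
    rw [e, le_div_iff₀ (by positivity)]
    linarith
  have hlim0 : Filter.Tendsto (fun n => Real.sin (ψ (y n)) ^ 2) Filter.atTop (nhds 0) := by
    have h1 : Filter.Tendsto (fun n => (M / π) ^ 2 / κ * (y n)⁻¹) Filter.atTop (nhds 0) := by
      simpa using (tendsto_inv_atTop_zero.comp hyt).const_mul ((M / π) ^ 2 / κ)
    exact tendsto_of_tendsto_of_tendsto_of_le_of_le tendsto_const_nhds h1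
      (fun n => sq_nonneg _) hb
  have hlim1 : Filter.Tendsto (fun n : ℕ => ψ (y n) - n * π) Filter.atTop (nhds (L + 3 * π / 4)) := by
    have h1 := ((hL.comp hyt).add ((bzphi_asymp ν hν0).comp hyt)).add_const (3 * π / 4)
    rw [add_zero] at h1
    refine h1.congr ?_
    intro n
    simp only [Function.comp, hy]
    ring
  have hlim2 : Filter.Tendsto (fun n => Real.sin (ψ (y n)) ^ 2) Filter.atTop
      (nhds (Real.sin (L + 3 * π / 4) ^ 2)) := by
    have h1 := ((Real.continuous_sin.tendsto _).comp hlim1).pow 2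
    refine h1.congr ?_
    intro n
    simp only [Function.comp]
    rw [Real.sin_sub_nat_mul_pi, mul_pow, ← pow_mul, mul_comm n 2, pow_mul]
    simp
  have hz := tendsto_nhds_unique hlim2 hlim0
  have hz' : Real.sin (L + 3 * π / 4) = 0 := pow_eq_zero_iff two_ne_zero |>.mp hz
  have := (Real.sin_eq_zero_iff_of_lt_of_lt (by linarith) (by linarith)).mp hz'
  linarith

lemma bz_count (ν : ℝ) (hν : 3 < ν) (ψ : ℝ → ℝ)
    (hd : ∀ x, ν < x → HasDerivAt ψ (bzp ν x * (1 + bzR ν x * Real.sin (ψ x) ^ 2)) x)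
    (hz : ∀ x, ν < x → (besselJ ν x = 0 ↔ Real.sin (ψ x) = 0))
    (hsm : StrictMonoOn ψ (Set.Ioi ν))
    (x₀ : ℝ) (hx₀ : ν < x₀) (h0 : ∀ x, ν < x → x ≤ x₀ → -π < ψ x ∧ ψ x < 0)
    (k : ℕ) (hk : 1 ≤ k) (j : ℝ) (hj : IsKthZero ν k j) : ψ j = ((k : ℝ) - 1) * π := by
  obtain ⟨hj0, hJ, hcard⟩ := hj
  have hπ := Real.pi_pos
  have hνz : ∀ x, 0 < x → besselJ ν x = 0 → ν < x := by
    intro x hx h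
    by_contra hc
    exact bz_nozero ν hν x hx (not_lt.mp hc) h
  have hjν := hνz j hj0 hJ
  have hgt : ∀ x, ν < x → -π < ψ x := by
    intro x hx
    rcases le_total x x₀ with h | h
    · exact (h0 x hx h).1
    · exact (h0 x₀ hx₀ le_rfl).1.trans_le (hsm.monotoneOn hx₀ hx h)
  have hnat : ∀ x, ν < x → besselJ ν x = 0 → ∃ m : ℕ, (m : ℝ) * π = ψ x := by
    intro x hx h
    obtain ⟨n, hn⟩ := Real.sin_eq_zero_iff.mp ((hz x hx).mp h)
    have h1 := hgt x hx
    rw [← hn] at h1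
    have h2 : (-1 : ℝ) < n := by
      by_contra hc
      nlinarith [not_lt.mp hc]
    have h3 : (-1 : ℤ) < n := by exact_mod_cast h2
    obtain ⟨m, rfl⟩ := Int.eq_ofNat_of_zero_le (by omega : 0 ≤ n)
    exact ⟨m, by simpa using hn⟩
  obtain ⟨m, hm⟩ := hnat j hjν hJ
  set Z := {x : ℝ | 0 < x ∧ x < j ∧ besselJ ν x = 0} with hZ
  have hZν : Z ⊆ Set.Ioi ν := fun x hx => hνz x hx.1 hx.2.2
  have himg : ψ '' Z = (fun i : ℕ => (i : ℝ) * π) '' (↑(Finset.range m) : Set ℕ) := by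
    ext t
    constructor
    · rintro ⟨x, hx, rfl⟩
      have hxν : ν < x := hZν hx
      obtain ⟨i, hi⟩ := hnat x hxν hx.2.2
      refine ⟨i, ?_, hi⟩
      have h1 := hsm hxν hjν hx.2.1
      rw [← hi, ← hm] at h1
      have h2 : (i : ℝ) < m := lt_of_mul_lt_mul_right h1 hπ.le
      have h3 : i < m := by exact_mod_cast h2
      simpa using h3
    · rintro ⟨i, hi, rfl⟩
      have hi' : i < m := by simpa using hi
      have him : (i : ℝ) * π < ψ j := by
        rw [← hm]
        have : (i : ℝ) < m := by exact_mod_cast hi'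
        exact mul_lt_mul_of_pos_right this hπ
      have hi0 : 0 ≤ (i : ℝ) * π := by positivity
      have h00 := (h0 x₀ hx₀ le_rfl).2
      have hx₀j : x₀ < j := (hsm.lt_iff_lt hx₀ hjν).mp (by linarith)
      have hcont : ContinuousOn ψ (Set.Icc x₀ j) :=
        fun z hz => (hd z (hx₀.trans_le hz.1)).continuousAt.continuousWithinAt
      obtain ⟨z, hz1, hz2⟩ := intermediate_value_Icc hx₀j.le hcont
        (show (i : ℝ) * π ∈ _ from ⟨by linarith, him.le⟩)
      have hzν : ν < z := hx₀.trans_le hz1.1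
      refine ⟨z, ⟨by linarith, ?_, ?_⟩, hz2⟩
      · exact (hsm.lt_iff_lt hzν hjν).mp (by rw [hz2]; exact him)
      · rw [hz z hzν, hz2]; exact Real.sin_nat_mul_pi i
  have hc1 : (ψ '' Z).ncard = Z.ncard := Set.ncard_image_of_injOn (hsm.injOn.mono hZν)
  have hc2 : ((fun i : ℕ => (i : ℝ) * π) '' (↑(Finset.range m) : Set ℕ)).ncard = m := by
    rw [Set.ncard_image_of_injective, Set.ncard_coe_finset, Finset.card_range]
    intro a b hab
    have := mul_right_cancel₀ hπ.ne' hab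
    exact_mod_cast this
  have hmk : m = k - 1 := by rw [← hc2, ← himg, hc1, hcard]
  rw [← hm, hmk, Nat.cast_sub hk]
  simp

/-- approximation `j_{ν,k} = F(ν, k - 1/4) + O(1/(ν+k))` in the regime
`j ≥ (1+c)ν`, for large `ν`. -/
theorem zero_minkowski_approx_away :
    ∃ c N C : ℝ, 0 < c ∧ c < 1 ∧ 0 < N ∧ 0 < C ∧ ∀ ν : ℝ, N < ν → ∀ k : ℕ, 1 ≤ k →
      ∀ j : ℝ, IsKthZero ν k j → (1 + c) * ν ≤ j →
      ∀ xstar : ℝ, ν ≤ xstar → xstar * gfun (ν / xstar) = (k : ℝ) - 1 / 4 →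
      |j - xstar| ≤ C / (ν + (k : ℝ)) := by
  refine ⟨1 / 2, 10000, 1350, by norm_num, by norm_num, by norm_num, by norm_num, ?_⟩
  intro ν hν k hk j hj hjc xs hxs hg
  have hν0 : 0 < ν := by linarith
  have hπ := Real.pi_pos
  obtain ⟨ψ, hd, hA, hz, hsm, x₀, hx₀, h0⟩ := bz_phase ν (by linarith)
  obtain ⟨L, hL, hL1, hL2, hL3⟩ := bz_limit ν hν ψ hd x₀ hx₀ h0
  have hLv := bz_L ν hν ψ hA L hL hL1 hL2
  have hψj := bz_count ν (by linarith) ψ hd hz hsm x₀ hx₀ h0 k hk j hj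
  have hφs := bzphi_gfun ν xs hν0 hxs
  rw [hg] at hφs
  have hj0 : 0 < j := hj.1
  have hjν : ν < j := by linarith
  obtain ⟨b1, b2⟩ := hL3 j (by linarith)
  rw [hψj, hLv] at b1 b2
  have c1 : bzphi ν xs ≤ bzphi ν j := by rw [← hφs]; linarith
  have c2 : bzphi ν j ≤ bzphi ν xs + 270 * j⁻¹ := by rw [← hφs]; linarith
  have hxj : xs ≤ j :=
    ((bzphi_strictMono ν hν0).le_iff_le (Set.mem_Ici.mpr hxs) (Set.mem_Ici.mpr hjν.le)).mp c1
  have hji : j⁻¹ ≤ 1 := inv_le_one_of_one_le₀ (by linarith)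
  have hx1 : 11 / 10 * ν ≤ xs := by
    by_contra hc
    have hc' := not_le.mp hc
    have h1 := bzphi_diff ν (11 / 10 * ν) j (2 / 5) hν0 (by linarith) (by linarith)
      (by norm_num) (by norm_num) (by nlinarith)
    have h2 := (bzphi_strictMono ν hν0).monotoneOn (Set.mem_Ici.mpr hxs)
      (Set.mem_Ici.mpr (by linarith : ν ≤ 11 / 10 * ν)) hc'.le
    linarith
  have h1 := bzphi_diff ν xs j (2 / 5) hν0 (by linarith) hxj (by norm_num) (by norm_num) (by
    nlinarith)
  have h2 : j - xs ≤ 675 * j⁻¹ := by linarith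
  have hφj : bzphi ν j ≤ j := by
    unfold bzphi
    have e1 : √(j ^ 2 - ν ^ 2) ≤ j := Real.sqrt_le_iff.mpr ⟨hj0.le, by nlinarith⟩
    have e2 : 0 ≤ ν * Real.arccos (ν / j) := mul_nonneg hν0.le (Real.arccos_nonneg _)
    linarith
  have hkj : (k : ℝ) ≤ j := by
    have hk1 : (1 : ℝ) ≤ k := by exact_mod_cast hk
    nlinarith [Real.pi_gt_three]
  rw [abs_of_nonneg (by linarith)]
  refine h2.trans ?_
  have hkp : (0 : ℝ) ≤ k := Nat.cast_nonneg k
  rw [← div_eq_mul_inv, div_le_div_iff₀ hj0 (by linarith)]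
  linarith
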